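/- arXiv:math/9812093 — 6 statements merged into one kernel-verified Lean document; each statement's English description precedes it below -/
import Mathlib

section
/- Let 𝔞 be a Lie algebra over ℂ and let (π₁,v₁),…,(πₙ,vₙ) be finite-dimensional cyclic 𝔞-modules. If z₁,…,zₙ are pairwise distinct complex numbers, then the 𝔞[t]-module Π(Z) = π₁(z₁)⊗⋯⊗πₙ(zₙ) is cyclic, generated by v₁⊗⋯⊗vₙ: the only 𝔞[t]-submodule of Π(Z) containing v₁⊗⋯⊗vₙ is the whole of Π(Z). -/
open scoped TensorProduct
open PiTensorProduct

namespace Fusion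

variable {L : Type} {ι : Type} [Fintype ι] [DecidableEq ι]
variable (π : ι → Type) [∀ i, AddCommGroup (π i)] [∀ i, Module ℂ (π i)]

/-- Apply the endomorphism `g` in the `i`-th slot of the tensor product. -/
noncomputable def slotE (i : ι) (g : Module.End ℂ (π i)) :
    Module.End ℂ (⨂[ℂ] j, π j) :=
  PiTensorProduct.map (Function.update (fun j => (LinearMap.id : π j →ₗ[ℂ] π j)) i g)

variable (ρ : ∀ i, L → Module.End ℂ (π i))

/-- The action of `t^k ⊗ x` on the evaluation tensor product `Π(Z)`. -/
noncomputable def monAct (z : ι → ℂ) (k : ℕ) (x : L) :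
    Module.End ℂ (⨂[ℂ] j, π j) :=
  ∑ i, (z i) ^ k • slotE π i (ρ i x)

/-- The action of `p ⊗ x` on the evaluation tensor product `Π(Z)`. -/
noncomputable def polyAct (z : ι → ℂ) (p : Polynomial ℂ) (x : L) :
    Module.End ℂ (⨂[ℂ] j, π j) :=
  ∑ i, p.eval (z i) • slotE π i (ρ i x)

variable (v : ∀ i, π i)

/-- `IsWord π ρ v z u d` : `u` is obtained from `v₁ ⊗ ⋯ ⊗ vₙ` by applying a monomial
`(t^{k₁}⊗x₁)⋯(t^{k_m}⊗x_m)` of total degree `d = k₁ + ⋯ + k_m` in `Π(Z)`. -/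
inductive IsWord (z : ι → ℂ) : (⨂[ℂ] j, π j) → ℕ → Prop
  | base : IsWord z (tprod ℂ v) 0
  | step (x : L) (k : ℕ) {u : ⨂[ℂ] j, π j} {d : ℕ} :
      IsWord z u d → IsWord z (monAct π ρ z k x u) (d + k)

/-- The filtration `Fⁱ_Z` on the tensor product. -/
noncomputable def F (z : ι → ℂ) (i : ℕ) : Submodule ℂ (⨂[ℂ] j, π j) :=
  Submodule.span ℂ {u | ∃ d ≤ i, IsWord π ρ v z u d}

lemma F_mono (z : ι → ℂ) {i j : ℕ} (h : i ≤ j) : F π ρ v z i ≤ F π ρ v z j :=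
  Submodule.span_mono (fun u ⟨d, hd, hw⟩ => ⟨d, hd.trans h, hw⟩)

lemma monAct_mem_F {z : ι → ℂ} (k : ℕ) (x : L) {i : ℕ} {u : ⨂[ℂ] j, π j}
    (hu : u ∈ F π ρ v z i) : monAct π ρ z k x u ∈ F π ρ v z (i + k) := by
  have : Submodule.map (monAct π ρ z k x) (F π ρ v z i) ≤ F π ρ v z (i + k) := by
    rw [F, Submodule.map_span]
    refine Submodule.span_le.2 ?_
    rintro _ ⟨u, ⟨d, hd, hw⟩, rfl⟩
    exact Submodule.subset_span ⟨d + k, by omega, hw.step x k⟩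
  exact this ⟨u, hu, rfl⟩

/-- `Fprev π ρ v z i` is `F^{i-1}`, with `F^{-1} = 0`. -/
noncomputable def Fprev (z : ι → ℂ) : ℕ → Submodule ℂ (⨂[ℂ] j, π j)
  | 0 => ⊥
  | (i + 1) => F π ρ v z i

lemma monAct_mem_Fprev {z : ι → ℂ} (k : ℕ) (x : L) {i : ℕ} {u : ⨂[ℂ] j, π j}
    (hu : u ∈ Fprev π ρ v z i) : monAct π ρ z k x u ∈ Fprev π ρ v z (i + k) := by
  cases i with
  | zero =>
      rw [Fprev, Submodule.mem_bot] at hu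
      subst hu
      simpa using (Fprev π ρ v z (0 + k)).zero_mem
  | succ i =>
      have : monAct π ρ z k x u ∈ F π ρ v z (i + k) := monAct_mem_F π ρ v k x hu
      have he : Fprev π ρ v z (i + 1 + k) = F π ρ v z (i + k) := by
        rw [show i + 1 + k = (i + k) + 1 by omega]; rfl
      rwa [he]

/-- The `i`-th graded piece `grⁱ_Z = Fⁱ_Z / F^{i-1}_Z` of the fusion product. -/
noncomputable abbrev gr (z : ι → ℂ) (i : ℕ) : Type :=
  ↥(F π ρ v z i) ⧸ (Fprev π ρ v z i).comap (F π ρ v z i).subtype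

/-- The map `grⁱ_Z → gr^{i+k}_Z` induced by the action of `t^k ⊗ x`. -/
noncomputable def grMap (z : ι → ℂ) (k : ℕ) (x : L) (i : ℕ) :
    gr π ρ v z i →ₗ[ℂ] gr π ρ v z (i + k) :=
  Submodule.mapQ _ _
    ((monAct π ρ z k x).restrict (fun u hu => monAct_mem_F π ρ v k x hu))
    (fun u hu => monAct_mem_Fprev π ρ v k x hu)

/-- The class of `v₁ ⊗ ⋯ ⊗ vₙ` in `gr⁰_Z`. -/
noncomputable def vbar (z : ι → ℂ) : gr π ρ v z 0 :=
  Submodule.Quotient.mk ⟨tprod ℂ v, Submodule.subset_span ⟨0, le_refl 0, IsWord.base⟩⟩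

end Fusion
open Fusion in
/-- For finite-dimensional cyclic `𝔞`-modules and pairwise distinct points,
the evaluation tensor product `Π(Z)` is a cyclic `𝔞[t]`-module generated by `v₁ ⊗ ⋯ ⊗ vₙ`. -/
theorem evaluation_tensor_product_cyclic
    {L : Type} [LieRing L] [LieAlgebra ℂ L]
    (n : ℕ) (π : Fin n → Type) [∀ i, AddCommGroup (π i)] [∀ i, Module ℂ (π i)]
    [∀ i, LieRingModule L (π i)] [∀ i, LieModule ℂ L (π i)]
    [∀ i, FiniteDimensional ℂ (π i)]
    (v : ∀ i, π i)
    (hcyc : ∀ i, ∀ N : LieSubmodule ℂ L (π i), v i ∈ N → N = ⊤)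
    (z : Fin n → ℂ) (hz : Function.Injective z)
    (P : Submodule ℂ (⨂[ℂ] i, π i))
    (hP : ∀ (p : Polynomial ℂ) (x : L) (u : ⨂[ℂ] i, π i), u ∈ P →
      polyAct π (fun i x => LieModule.toEnd ℂ L (π i) x) z p x u ∈ P)
    (hvP : tprod ℂ v ∈ P) :
    P = ⊤ := by
  classical
  have hslot : ∀ (i : Fin n) (x : L) (u : ⨂[ℂ] i, π i), u ∈ P →
      slotE π i (LieModule.toEnd ℂ L (π i) x) u ∈ P := by
    intro i x u hu
    have h := hP (Lagrange.basis Finset.univ z i) x u hu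
    have e : polyAct π (fun i x => LieModule.toEnd ℂ L (π i) x) z
        (Lagrange.basis Finset.univ z i) x = slotE π i (LieModule.toEnd ℂ L (π i) x) := by
      unfold polyAct
      rw [Finset.sum_eq_single i]
      · rw [Lagrange.eval_basis_self (hz.injOn) (Finset.mem_univ i), one_smul]
      · intro j _ hj
        rw [Lagrange.eval_basis_of_ne hj.symm (Finset.mem_univ j), zero_smul]
      · intro h
        exact absurd (Finset.mem_univ i) h
    rwa [e] at h
  have hupd : ∀ (i : Fin n) (x : L) (w : ∀ j, π j) (y : π i),
      slotE π i (LieModule.toEnd ℂ L (π i) x) (tprod ℂ (Function.update w i y))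
        = tprod ℂ (Function.update w i ⁅x, y⁆) := by
    intro i x w y
    unfold slotE
    rw [PiTensorProduct.map_tprod]
    congr 1
    funext j
    by_cases hj : j = i
    · subst hj
      simp
    · simp [Function.update_of_ne hj]
  have key : ∀ (s : Finset (Fin n)) (w : ∀ j, π j), (∀ j, j ∉ s → w j = v j) →
      tprod ℂ w ∈ P := by
    intro s
    induction s using Finset.induction_on with
    | empty =>
      intro w hw
      have : w = v := funext fun j => hw j (Finset.notMem_empty j)
      rwa [this]
    | insert i s his ih =>
      intro w hw
      let N : LieSubmodule ℂ L (π i) :=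
        { carrier := {y | tprod ℂ (Function.update w i y) ∈ P}
          add_mem' := by
            intro a b ha hb
            simp only [Set.mem_setOf_eq] at ha hb ⊢
            rw [MultilinearMap.map_update_add]
            exact P.add_mem ha hb
          zero_mem' := by
            simp only [Set.mem_setOf_eq]
            rw [MultilinearMap.map_update_zero]
            exact P.zero_mem
          smul_mem' := by
            intro c a ha
            simp only [Set.mem_setOf_eq] at ha ⊢
            rw [MultilinearMap.map_update_smul]
            exact P.smul_mem c ha
          lie_mem := by
            intro x y hy
            have h := hslot i x _ hy
            rw [hupd] at h
            exact h }
      have hN : N = ⊤ := by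
        apply hcyc i N
        change tprod ℂ (Function.update w i (v i)) ∈ P
        apply ih
        intro j hj
        by_cases hji : j = i
        · subst hji
          simp
        · rw [Function.update_of_ne hji]
          exact hw j (by simp [hji, hj])
      have hm : w i ∈ N := by
        rw [hN]
        exact LieSubmodule.mem_top _
      have hm' : tprod ℂ (Function.update w i (w i)) ∈ P := hm
      rwa [Function.update_eq_self] at hm'
  rw [eq_top_iff, ← PiTensorProduct.span_tprod_eq_top, Submodule.span_le]
  rintro _ ⟨w, rfl⟩
  exact key Finset.univ w (fun j hj => absurd (Finset.mem_univ j) hj)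
end

section
/- Let 𝔞 be a Lie algebra over ℂ and let (M₁,v₁),…,(Mₙ,vₙ) be graded cyclic 𝔞[t]-modules. If z₁,…,zₙ are pairwise distinct complex numbers, then the 𝔞[t]-module M₁(z₁)⊗⋯⊗Mₙ(zₙ) — the space M₁⊗⋯⊗Mₙ with (p⊗x)·(u₁⊗⋯⊗uₙ) = Σᵢ u₁⊗⋯⊗((p⊗x)·uᵢ taken in Mᵢ(zᵢ))⊗⋯⊗uₙ — is cyclic, generated by v₁⊗⋯⊗vₙ. -/
open scoped TensorProduct
open PiTensorProduct

namespace FusionG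

open PiTensorProduct
open scoped TensorProduct

variable {L : Type} {ι : Type} [Fintype ι] [DecidableEq ι]
variable (M : ι → Type) [∀ i, AddCommGroup (M i)] [∀ i, Module ℂ (M i)]
variable (A : ∀ i, ℕ → L → Module.End ℂ (M i))

/-- If `t^k ⊗ x` acts on the graded module `Mᵢ` via `A i k x`, then on the shifted module
`Mᵢ(z)` it acts via `((t+z)^k ⊗ x) = ∑_r C(k,r) z^{k-r} (t^r ⊗ x)`. -/
noncomputable def shiftAct (i : ι) (z : ℂ) (k : ℕ) (x : L) : Module.End ℂ (M i) :=
  ∑ r ∈ Finset.range (k + 1), ((k.choose r : ℂ) * z ^ (k - r)) • A i r x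

/-- The action of `t^k ⊗ x` on the tensor product `M₁(z₁) ⊗ ⋯ ⊗ Mₙ(zₙ)` of shifted graded
modules. -/
noncomputable def monAct (z : ι → ℂ) (k : ℕ) (x : L) :
    Module.End ℂ (⨂[ℂ] j, M j) :=
  ∑ i, Fusion.slotE M i (shiftAct M A i (z i) k x)

variable (v : ∀ i, M i)

/-- Words in the monomial operators applied to `v₁ ⊗ ⋯ ⊗ vₙ`, together with their total
`t`-degree. -/
inductive IsWord (z : ι → ℂ) : (⨂[ℂ] j, M j) → ℕ → Prop
  | base : IsWord z (tprod ℂ v) 0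
  | step (x : L) (k : ℕ) {u : ⨂[ℂ] j, M j} {d : ℕ} :
      IsWord z u d → IsWord z (monAct M A z k x u) (d + k)

/-- The filtration on the tensor product of shifted graded modules. -/
noncomputable def F (z : ι → ℂ) (i : ℕ) : Submodule ℂ (⨂[ℂ] j, M j) :=
  Submodule.span ℂ {u | ∃ d ≤ i, IsWord M A v z u d}

lemma monAct_mem_F {z : ι → ℂ} (k : ℕ) (x : L) {i : ℕ} {u : ⨂[ℂ] j, M j}
    (hu : u ∈ F M A v z i) : monAct M A z k x u ∈ F M A v z (i + k) := by
  have h : Submodule.map (monAct M A z k x) (F M A v z i) ≤ F M A v z (i + k) := by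
    rw [F, Submodule.map_span]
    refine Submodule.span_le.2 ?_
    rintro _ ⟨u, ⟨d, hd, hw⟩, rfl⟩
    exact Submodule.subset_span ⟨d + k, by omega, hw.step x k⟩
  exact h ⟨u, hu, rfl⟩

/-- `Fprev M A v z i` is `F^{i-1}`, with `F^{-1} = 0`. -/
noncomputable def Fprev (z : ι → ℂ) : ℕ → Submodule ℂ (⨂[ℂ] j, M j)
  | 0 => ⊥
  | (i + 1) => F M A v z i

lemma monAct_mem_Fprev {z : ι → ℂ} (k : ℕ) (x : L) {i : ℕ} {u : ⨂[ℂ] j, M j}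
    (hu : u ∈ Fprev M A v z i) : monAct M A z k x u ∈ Fprev M A v z (i + k) := by
  cases i with
  | zero =>
      rw [Fprev, Submodule.mem_bot] at hu
      subst hu
      simpa using (Fprev M A v z (0 + k)).zero_mem
  | succ i =>
      have h : monAct M A z k x u ∈ F M A v z (i + k) := monAct_mem_F M A v k x hu
      have he : Fprev M A v z (i + 1 + k) = F M A v z (i + k) := by
        rw [show i + 1 + k = (i + k) + 1 by omega]; rfl
      rwa [he]

/-- The graded pieces of the fusion product of graded modules. -/
noncomputable abbrev gr (z : ι → ℂ) (i : ℕ) : Type :=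
  ↥(F M A v z i) ⧸ (Fprev M A v z i).comap (F M A v z i).subtype

/-- The map `grⁱ → gr^{i+k}` induced by `t^k ⊗ x`. -/
noncomputable def grMap (z : ι → ℂ) (k : ℕ) (x : L) (i : ℕ) :
    gr M A v z i →ₗ[ℂ] gr M A v z (i + k) :=
  Submodule.mapQ _ _
    ((monAct M A z k x).restrict (fun u hu => monAct_mem_F M A v k x hu))
    (fun u hu => monAct_mem_Fprev M A v k x hu)

/-- The class of `v₁ ⊗ ⋯ ⊗ vₙ` in `gr⁰`. -/
noncomputable def vbar (z : ι → ℂ) : gr M A v z 0 :=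
  Submodule.Quotient.mk ⟨tprod ℂ v, Submodule.subset_span ⟨0, le_refl 0, IsWord.base⟩⟩

end FusionG
namespace FusionH

/-- The slot operator as a linear map in the endomorphism. -/
noncomputable def slotL {ι : Type} [Fintype ι] [DecidableEq ι]
    (M : ι → Type) [∀ i, AddCommGroup (M i)] [∀ i, Module ℂ (M i)] (i : ι) :
    Module.End ℂ (M i) →ₗ[ℂ] Module.End ℂ (⨂[ℂ] j, M j) :=
  (PiTensorProduct.mapMultilinear ℂ M M).toLinearMap (fun _ => LinearMap.id) i

lemma slotL_apply {ι : Type} [Fintype ι] [DecidableEq ι]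
    (M : ι → Type) [∀ i, AddCommGroup (M i)] [∀ i, Module ℂ (M i)] (i : ι)
    (g : Module.End ℂ (M i)) : slotL M i g = Fusion.slotE M i g := rfl

lemma slotE_tprod {ι : Type} [Fintype ι] [DecidableEq ι]
    (M : ι → Type) [∀ i, AddCommGroup (M i)] [∀ i, Module ℂ (M i)] (i : ι)
    (g : Module.End ℂ (M i)) (u : ∀ i, M i) (m : M i) :
    Fusion.slotE M i g (tprod ℂ (Function.update u i m))
      = tprod ℂ (Function.update u i (g m)) := by
  rw [Fusion.slotE, PiTensorProduct.map_tprod]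
  congr 1
  funext j
  by_cases h : j = i
  · subst h; simp
  · simp [h]

/-- Sufficiently high powers of `t` act by zero on a finite-dimensional graded module. -/
lemma exists_bound {L : Type} {V : Type} [AddCommGroup V] [Module ℂ V] [FiniteDimensional ℂ V]
    (A : ℕ → L → Module.End ℂ V) (G : ℕ → Submodule ℂ V) (hG : DirectSum.IsInternal G)
    (hgr : ∀ (k : ℕ) (x : L) (j : ℕ), ∀ u ∈ G j, A k x u ∈ G (j + k)) :
    ∃ N, ∀ r, N ≤ r → ∀ x, A r x = 0 := by
  have hfin : {j | G j ≠ ⊥}.Finite :=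
    WellFoundedGT.finite_ne_bot_of_iSupIndep hG.submodule_iSupIndep
  obtain ⟨N, hN⟩ := hfin.bddAbove
  refine ⟨N + 1, fun r hr x => ?_⟩
  have hbot : ∀ j, G (j + r) = ⊥ := by
    intro j
    by_contra h
    have := hN (show j + r ∈ {j | G j ≠ ⊥} from h)
    omega
  have htop : (⊤ : Submodule ℂ V) ≤ LinearMap.ker (A r x) := by
    rw [← hG.submodule_iSup_eq_top]
    refine iSup_le fun j u hu => ?_
    have := hgr r x j u hu
    rw [hbot j] at this
    simpa using this
  ext u
  exact htop (Submodule.mem_top)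

/-- The action of `p ⊗ x` on the shifted module, truncated at `N`. -/
noncomputable def T {L V : Type} [AddCommGroup V] [Module ℂ V]
    (A : ℕ → L → Module.End ℂ V) (N : ℕ) (z : ℂ) (x : L) :
    Polynomial ℂ →ₗ[ℂ] Module.End ℂ V :=
  ∑ r ∈ Finset.range N,
    ((Polynomial.lcoeff ℂ r).comp (Polynomial.taylor z)).smulRight (A r x)

lemma T_apply {L V : Type} [AddCommGroup V] [Module ℂ V]
    (A : ℕ → L → Module.End ℂ V) (N : ℕ) (z : ℂ) (x : L) (p : Polynomial ℂ) :
    T A N z x p = ∑ r ∈ Finset.range N, (Polynomial.taylor z p).coeff r • A r x := by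
  simp [T]

lemma T_X_pow {L : Type} {ι : Type}
    (M : ι → Type) [∀ i, AddCommGroup (M i)] [∀ i, Module ℂ (M i)]
    (A : ∀ i, ℕ → L → Module.End ℂ (M i)) (i : ι) (N : ℕ)
    (hN : ∀ r, N ≤ r → ∀ x, A i r x = 0) (z : ℂ) (x : L) (k : ℕ) :
    T (A i) N z x (Polynomial.X ^ k) = FusionG.shiftAct M A i z k x := by
  rw [T_apply, FusionG.shiftAct]
  have hc : ∀ r, (Polynomial.taylor z (Polynomial.X ^ k)).coeff r
      = (k.choose r : ℂ) * z ^ (k - r) := by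
    intro r
    rw [Polynomial.taylor_X_pow, Polynomial.coeff_X_add_C_pow, mul_comm]
  simp only [hc]
  have h1 : ∀ K, N ≤ K → ∑ r ∈ Finset.range N, ((k.choose r : ℂ) * z ^ (k - r)) • A i r x
      = ∑ r ∈ Finset.range K, ((k.choose r : ℂ) * z ^ (k - r)) • A i r x := by
    intro K hK
    refine Finset.sum_subset (Finset.range_mono hK) fun r _ hr => ?_
    rw [hN r (by simpa using hr), smul_zero]
  have h2 : ∀ K, k + 1 ≤ K →
      ∑ r ∈ Finset.range (k + 1), ((k.choose r : ℂ) * z ^ (k - r)) • A i r x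
      = ∑ r ∈ Finset.range K, ((k.choose r : ℂ) * z ^ (k - r)) • A i r x := by
    intro K hK
    refine Finset.sum_subset (Finset.range_mono hK) fun r _ hr => ?_
    rw [Nat.choose_eq_zero_of_lt (by simpa using hr)]
    simp
  rw [h1 (max N (k + 1)) (le_max_left _ _), h2 (max N (k + 1)) (le_max_right _ _)]

/-- Hermite interpolation. -/
lemma exists_poly {n : ℕ} (z : Fin n → ℂ) (hz : Function.Injective z) (N : ℕ) (i : Fin n)
    (r : ℕ) : ∃ p : Polynomial ℂ,
      (∀ s < N, (Polynomial.taylor (z i) p).coeff s = if s = r then 1 else 0) ∧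
      ∀ j ≠ i, ∀ s < N, (Polynomial.taylor (z j) p).coeff s = 0 := by
  classical
  have hco : Pairwise fun a b : Fin n =>
      IsCoprime (Ideal.span {(Polynomial.X - Polynomial.C (z a)) ^ N})
        (Ideal.span {(Polynomial.X - Polynomial.C (z b)) ^ N}) := by
    intro a b hab
    rw [Ideal.isCoprime_span_singleton_iff]
    exact (Polynomial.pairwise_coprime_X_sub_C hz hab).pow
  obtain ⟨p, hp⟩ := Ideal.exists_forall_sub_mem_ideal hco
    (fun j => if j = i then (Polynomial.X - Polynomial.C (z i)) ^ r else 0)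
  have key : ∀ j, ∀ s < N, (Polynomial.taylor (z j) p).coeff s
      = (Polynomial.taylor (z j)
          (if j = i then (Polynomial.X - Polynomial.C (z i)) ^ r else 0)).coeff s := by
    intro j s hs
    obtain ⟨q, hq⟩ := Ideal.mem_span_singleton.1 (hp j)
    have h := congrArg (fun f => (Polynomial.taylor (z j) f).coeff s) hq
    simp only [map_sub, Polynomial.coeff_sub, Polynomial.taylor_mul, Polynomial.taylor_pow,
      Polynomial.taylor_X, Polynomial.taylor_C, add_sub_cancel_right] at h
    rw [Polynomial.coeff_X_pow_mul', if_neg (show ¬ N ≤ s by omega)] at h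
    exact sub_eq_zero.1 h
  refine ⟨p, fun s hs => ?_, fun j hj s hs => ?_⟩
  · rw [key i s hs, if_pos rfl]
    simp [Polynomial.taylor_pow, Polynomial.coeff_X_pow]
  · rw [key j s hs, if_neg hj]
    simp

end FusionH

open PiTensorProduct in
open scoped TensorProduct in
/-- For graded cyclic `𝔞[t]`-modules `(M₁,v₁), …, (Mₙ,vₙ)` and pairwise
distinct points `z₁, …, zₙ`, the tensor product `M₁(z₁) ⊗ ⋯ ⊗ Mₙ(zₙ)` of the shifted modules
is a cyclic `𝔞[t]`-module generated by `v₁ ⊗ ⋯ ⊗ vₙ`. -/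
theorem shifted_graded_tensor_product_cyclic
    {L : Type} [LieRing L] [LieAlgebra ℂ L]
    (n : ℕ) (M : Fin n → Type) [∀ i, AddCommGroup (M i)] [∀ i, Module ℂ (M i)]
    [∀ i, FiniteDimensional ℂ (M i)]
    (A : ∀ i, ℕ → L → Module.End ℂ (M i))
    (hadd : ∀ i k x y, A i k (x + y) = A i k x + A i k y)
    (hsmul : ∀ i k (c : ℂ) x, A i k (c • x) = c • A i k x)
    (hbracket : ∀ i k l x y,
      A i k x * A i l y - A i l y * A i k x = A i (k + l) ⁅x, y⁆)
    (Mgr : ∀ i, ℕ → Submodule ℂ (M i))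
    (hinternal : ∀ i, DirectSum.IsInternal (Mgr i))
    (hgraded : ∀ i (k : ℕ) (x : L) (j : ℕ), ∀ u ∈ Mgr i j, A i k x u ∈ Mgr i (j + k))
    (v : ∀ i, M i)
    (hcyc : ∀ i, ∀ P : Submodule ℂ (M i),
      (∀ (k : ℕ) (x : L), ∀ u ∈ P, A i k x u ∈ P) → v i ∈ P → P = ⊤)
    (z : Fin n → ℂ) (hz : Function.Injective z)
    (P : Submodule ℂ (⨂[ℂ] i, M i))
    (hP : ∀ (k : ℕ) (x : L) (u : ⨂[ℂ] i, M i), u ∈ P → FusionG.monAct M A z k x u ∈ P)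
    (hvP : tprod ℂ v ∈ P) :
    P = ⊤ := by
  have hb : ∀ i, ∃ N, ∀ r, N ≤ r → ∀ x, A i r x = 0 := fun i =>
    FusionH.exists_bound (A i) (Mgr i) (hinternal i) (hgraded i)
  choose B hB using hb
  obtain ⟨N, hN⟩ : ∃ N, ∀ i, B i ≤ N :=
    ⟨Finset.univ.sup B, fun i => Finset.le_sup (Finset.mem_univ i)⟩
  have hN0 : ∀ i r, N ≤ r → ∀ x, A i r x = 0 := fun i r hr => hB i r ((hN i).trans hr)
  -- the action of `p ⊗ x` preserves `P`
  have hpoly : ∀ (x : L) (p : Polynomial ℂ) (u : ⨂[ℂ] i, M i), u ∈ P →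
      (∑ i, FusionH.slotL M i (FusionH.T (A i) N (z i) x p)) u ∈ P := by
    intro x p u hu
    induction p using Polynomial.induction_on' with
    | add p q hp hq =>
      simp only [map_add, Finset.sum_add_distrib, LinearMap.add_apply]
      exact P.add_mem hp hq
    | monomial k c =>
      rw [← Polynomial.C_mul_X_pow_eq_monomial, ← Polynomial.smul_eq_C_mul]
      simp only [map_smul, ← Finset.smul_sum, LinearMap.smul_apply]
      refine P.smul_mem _ ?_
      have := hP k x u hu
      rw [FusionG.monAct] at this
      simpa only [FusionH.T_X_pow M A _ N (hN0 _), FusionH.slotL_apply] using this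
  -- each slot operator preserves `P`
  have hslot : ∀ i r x, ∀ u ∈ P, Fusion.slotE M i (A i r x) u ∈ P := by
    intro i r x u hu
    by_cases hr : N ≤ r
    · rw [hN0 i r hr, ← FusionH.slotL_apply, map_zero]
      exact P.zero_mem
    obtain ⟨p, hp1, hp2⟩ := FusionH.exists_poly z hz N i r
    have h := hpoly x p u hu
    rw [Finset.sum_eq_single i] at h
    · have hT : FusionH.T (A i) N (z i) x p = A i r x := by
        rw [FusionH.T_apply, Finset.sum_eq_single r]
        · rw [hp1 r (by omega), if_pos rfl, one_smul]
        · intro s hs hsr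
          rw [hp1 s (by simpa using hs), if_neg hsr, zero_smul]
        · intro h
          exact absurd (Finset.mem_range.2 (by omega)) h
      rwa [hT, FusionH.slotL_apply] at h
    · intro j _ hj
      have hT : FusionH.T (A j) N (z j) x p = 0 := by
        rw [FusionH.T_apply]
        refine Finset.sum_eq_zero fun s hs => ?_
        rw [hp2 j hj s (by simpa using hs), zero_smul]
      rw [hT, map_zero]
    · simp
  have hall : ∀ s : Finset (Fin n), ∀ u : ∀ i, M i, (∀ j, j ∉ s → u j = v j) →
      tprod ℂ u ∈ P := by
    intro s
    induction s using Finset.induction_on with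
    | empty =>
      intro u hu
      rwa [show u = v from funext fun j => hu j (by simp)]
    | insert i s his ih =>
      intro u hu
      have hQ := hcyc i (P.comap ((PiTensorProduct.tprod ℂ).toLinearMap u i)) ?_ ?_
      · have : u i ∈ P.comap ((PiTensorProduct.tprod ℂ).toLinearMap u i) := hQ ▸ Submodule.mem_top
        simpa using this
      · intro k x m hm
        have := hslot i k x _ hm
        simp only [MultilinearMap.toLinearMap_apply, FusionH.slotE_tprod] at this
        simpa using this
      · simp only [Submodule.mem_comap, MultilinearMap.toLinearMap_apply]
        refine ih _ fun j hj => ?_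
        by_cases h : j = i
        · subst h; simp
        · simp only [ne_eq, h, not_false_eq_true, Function.update_of_ne]
          exact hu j (by simp [h, hj])
  rw [eq_top_iff, ← PiTensorProduct.span_tprod_eq_top, Submodule.span_le]
  rintro _ ⟨u, rfl⟩
  exact hall Finset.univ u (by simp)
end

section
/- Let z₁,…,zₙ be pairwise distinct complex numbers and N ≥ 1 an integer. Consider the nN × nN complex matrix A whose rows are indexed by k ∈ {1,…,nN} and whose columns are indexed by pairs (i,r) with 1 ≤ i ≤ n and 1 ≤ r ≤ N, with entry A_{k,(i,r)} = C(k,r)·zᵢ^{k−r} when k ≥ r (where C(k,r) is the binomial coefficient) and A_{k,(i,r)} = 0 when k < r. Then A is invertible. -/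
/-- The confluent Vandermonde type matrix with rows indexed by
`k ∈ {1, …, nN}` and columns indexed by pairs `(i, r)`, `1 ≤ i ≤ n`, `1 ≤ r ≤ N`, whose
`(k, (i, r))` entry is `C(k, r)·zᵢ^(k-r)` for `k ≥ r` and `0` otherwise, is invertible whenever
the `zᵢ` are pairwise distinct.  (Here rows and columns are `0`-based: the row `k₀` corresponds
to `k = k₀ + 1` and the column `(i₀, r₀)` to `(i, r) = (i₀ + 1, r₀ + 1)`.) -/
theorem confluent_vandermonde_invertible
    (n N : ℕ) (hn : 1 ≤ n) (hN : 1 ≤ N)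
    (z : Fin n → ℂ) (hz : Function.Injective z)
    (A : Matrix (Fin (n * N)) (Fin (n * N)) ℂ)
    (hA : ∀ (k : Fin (n * N)) (c : Fin (n * N)),
      A k c =
        if ((finProdFinEquiv.symm c).2 : ℕ) ≤ (k : ℕ) then
          (Nat.choose ((k : ℕ) + 1) (((finProdFinEquiv.symm c).2 : ℕ) + 1) : ℂ) *
            z (finProdFinEquiv.symm c).1 ^ ((k : ℕ) - ((finProdFinEquiv.symm c).2 : ℕ))
        else 0) :
    IsUnit A := by
  classical
  rw [Matrix.isUnit_iff_isUnit_det, isUnit_iff_ne_zero]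
  intro hdet
  obtain ⟨v, hv0, hv⟩ := Matrix.exists_vecMul_eq_zero_iff.mpr hdet
  apply hv0
  set Q : Polynomial ℂ :=
    ∑ k : Fin (n * N), Polynomial.monomial (k : ℕ) (v k * ((k : ℕ) + 1 : ℂ)) with hQ
  have hcoeff : ∀ k : Fin (n * N), Q.coeff (k : ℕ) = v k * ((k : ℕ) + 1 : ℂ) := by
    intro k
    rw [hQ, Polynomial.finset_sum_coeff, Finset.sum_eq_single k]
    · simp
    · intro b _ hb
      rw [Polynomial.coeff_monomial, if_neg]
      exact fun h => hb (Fin.ext h)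
    · simp
  have hdeg : Q.degree < ((n * N : ℕ) : WithBot ℕ) := by
    rw [Polynomial.degree_lt_iff_coeff_zero]
    intro m hm
    rw [hQ, Polynomial.finset_sum_coeff]
    refine Finset.sum_eq_zero fun k _ => ?_
    rw [Polynomial.coeff_monomial, if_neg]
    have := k.2
    omega
  have hdvd : ∀ i : Fin n, (Polynomial.X - Polynomial.C (z i)) ^ N ∣ Q := by
    intro i
    rw [Polynomial.X_sub_C_pow_dvd_iff, Polynomial.X_pow_dvd_iff]
    intro r hr
    change (Polynomial.taylor (z i) Q).coeff r = 0
    rw [Polynomial.taylor_coeff, hQ, map_sum, Polynomial.eval_finset_sum]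
    have h := congrFun hv (finProdFinEquiv (i, ⟨r, hr⟩))
    simp only [Matrix.vecMul, dotProduct, hA, Equiv.symm_apply_apply, Pi.zero_apply] at h
    have h2 := congrArg (fun x => ((r : ℂ) + 1) * x) h
    simp only [Finset.mul_sum, mul_zero] at h2
    rw [← h2]
    refine Finset.sum_congr rfl fun k _ => ?_
    rw [Polynomial.hasseDeriv_monomial, Polynomial.eval_monomial]
    split_ifs with hk
    · have e : ((k : ℕ) + 1 : ℂ) * (Nat.choose (k : ℕ) r : ℂ)
          = (Nat.choose ((k : ℕ) + 1) (r + 1) : ℂ) * ((r : ℂ) + 1) := by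
        exact_mod_cast Nat.add_one_mul_choose_eq (k : ℕ) r
      linear_combination (v k * z i ^ ((k : ℕ) - r)) * e
    · rw [Nat.choose_eq_zero_of_lt (by omega)]
      simp
  have hprod : (∏ i : Fin n, (Polynomial.X - Polynomial.C (z i)) ^ N) ∣ Q := by
    refine Finset.prod_dvd_of_coprime ?_ fun i _ => hdvd i
    intro i _ j _ hij
    exact (Polynomial.pairwise_coprime_X_sub_C hz hij).pow
  have hQ0 : Q = 0 := by
    refine Polynomial.eq_zero_of_dvd_of_degree_lt hprod ?_
    rw [Polynomial.degree_prod]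
    simpa [Polynomial.degree_pow] using hdeg
  funext k
  have h := hcoeff k
  rw [hQ0, Polynomial.coeff_zero] at h
  rcases mul_eq_zero.mp h.symm with h | h
  · exact h
  · exact absurd h (Nat.cast_add_one_ne_zero _)
end

section
/- Let 𝔤 be a finite-dimensional simple Lie algebra over ℂ and (π₁,v₁),…,(πₙ,vₙ) finite-dimensional cyclic 𝔤-modules. There exists a nonzero polynomial D ∈ ℂ[z₁,…,zₙ] such that for any two tuples Z₁ and Z₂ of pairwise distinct complex numbers satisfying D(Z₁) ≠ 0 and D(Z₂) ≠ 0, there is a linear automorphism φ of π₁⊗⋯⊗πₙ that commutes with the diagonal action of 𝔤 and satisfies φ(Fⁱ_{Z₁}) = Fⁱ_{Z₂} for all i ≥ 0; i.e., the filtered tensor products at any two points of a suitable Zariski open subset of ℂⁿ∖Δ are isomorphic as filtered 𝔤-modules. -/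
open scoped TensorProduct
open PiTensorProduct

namespace FusionAux
open LieModule

section Casimir
variable {L : Type} [LieRing L] [LieAlgebra ℂ L] [LieAlgebra.IsSimple ℂ L] [FiniteDimensional ℂ L]
variable {M : Type} [AddCommGroup M] [Module ℂ M] [LieRingModule L M] [LieModule ℂ L M]

variable (L) in
lemma perfect : ⁅(⊤ : LieIdeal ℂ L), (⊤ : LieIdeal ℂ L)⁆ = ⊤ := by
  rcases LieAlgebra.IsSimple.eq_bot_or_eq_top ⁅(⊤ : LieIdeal ℂ L), (⊤ : LieIdeal ℂ L)⁆ with h | h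
  · exfalso
    apply LieAlgebra.IsSimple.non_abelian ℂ (L := L)
    refine ⟨fun x y => ?_⟩
    have : ⁅x, y⁆ ∈ ⁅(⊤ : LieIdeal ℂ L), (⊤ : LieIdeal ℂ L)⁆ :=
      LieSubmodule.lie_mem_lie (LieSubmodule.mem_top x) (LieSubmodule.mem_top y)
    rw [h] at this
    simpa using this
  · exact h

lemma trivial_of_traceForm [FiniteDimensional ℂ M] (h : traceForm ℂ L M = 0) (x : L) (m : M) :
    ⁅x, m⁆ = 0 := by
  have h1 := LieModule.isNilpotent_derivedSeries_of_traceForm_eq_zero h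
  have hD : ∀ y : L, y ∈ LieAlgebra.derivedSeries ℂ L 1 := by
    intro y
    have : LieAlgebra.derivedSeries ℂ L 1 = ⊤ := by
      rw [LieAlgebra.derivedSeries_def, LieAlgebra.derivedSeriesOfIdeal_succ,
        LieAlgebra.derivedSeriesOfIdeal_zero, perfect]
    rw [this]; trivial
  have h2 : LieModule.IsNilpotent L M := by
    rw [LieModule.isNilpotent_iff_forall' (R := ℂ)] at h1 ⊢
    intro y
    exact h1 ⟨y, hD y⟩
  obtain ⟨k, hk⟩ := (LieModule.isNilpotent_iff ℂ L M).1 h2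
  have key : ∀ N : LieSubmodule ℂ L M,
      ⁅(⊤ : LieIdeal ℂ L), N⁆ ≤ ⁅(⊤ : LieIdeal ℂ L), ⁅(⊤ : LieIdeal ℂ L), N⁆⁆ := by
    intro N
    conv_lhs => rw [← perfect L]
    rw [LieSubmodule.lieIdeal_oper_eq_span, LieSubmodule.lieSpan_le]
    rintro _ ⟨⟨y, hy⟩, ⟨u, hu⟩, rfl⟩
    change ⁅y, u⁆ ∈ ⁅(⊤ : LieIdeal ℂ L), ⁅(⊤ : LieIdeal ℂ L), N⁆⁆
    rw [← LieSubmodule.mem_toSubmodule, LieSubmodule.lieIdeal_oper_eq_linear_span'] at hy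
    induction hy using Submodule.span_induction with
    | mem y h =>
      obtain ⟨a, -, c, -, rfl⟩ := h
      rw [lie_lie]
      exact sub_mem
        (LieSubmodule.lie_mem_lie trivial (LieSubmodule.lie_mem_lie trivial hu))
        (LieSubmodule.lie_mem_lie trivial (LieSubmodule.lie_mem_lie trivial hu))
    | zero => simp
    | add a c _ _ ha hc => rw [add_lie]; exact add_mem ha hc
    | smul t a _ ha => rw [smul_lie]; exact SMulMemClass.smul_mem t ha
  have h3 : ∀ j, lowerCentralSeries ℂ L M 1 ≤ lowerCentralSeries ℂ L M (j + 1) := by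
    intro j
    induction j with
    | zero => exact le_rfl
    | succ j ih =>
      refine ih.trans ?_
      rw [lowerCentralSeries_succ ℂ L M (j+1), lowerCentralSeries_succ ℂ L M j]
      exact key _
  have h4 : lowerCentralSeries ℂ L M 1 ≤ ⊥ :=
    (h3 k).trans (hk ▸ LieModule.antitone_lowerCentralSeries ℂ L M (Nat.le_succ k))
  have : ⁅x, m⁆ ∈ lowerCentralSeries ℂ L M 1 := by
    rw [LieModule.lowerCentralSeries_succ, LieModule.lowerCentralSeries_zero]
    exact LieSubmodule.lie_mem_lie (LieSubmodule.mem_top x) (LieSubmodule.mem_top m)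
  simpa using h4 this

lemma traceForm_nondeg [FiniteDimensional ℂ M] (h : traceForm ℂ L M ≠ 0) :
    (traceForm ℂ L M).Nondegenerate := by
  let I : LieIdeal ℂ L :=
    { LinearMap.ker (traceForm ℂ L M) with
      lie_mem := by
        intro x y hy
        change y ∈ LinearMap.ker (traceForm ℂ L M) at hy
        change ⁅x, y⁆ ∈ LinearMap.ker (traceForm ℂ L M)
        rw [LinearMap.mem_ker] at *
        ext z
        rw [traceForm_apply_lie_apply', hy]
        simp }
  have hI : ∀ y, y ∈ I ↔ traceForm ℂ L M y = 0 := fun y => Iff.rfl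
  have hker : LinearMap.ker (traceForm ℂ L M) = ⊥ := by
    rcases LieAlgebra.IsSimple.eq_bot_or_eq_top I with h' | h'
    · rw [eq_bot_iff]
      intro y hy
      have : y ∈ I := hy
      rw [h'] at this
      simpa using this
    · exfalso
      apply h
      refine LinearMap.ext fun y => ?_
      have : y ∈ I := by rw [h']; trivial
      exact (hI y).1 this
  exact (LieModule.traceForm_isSymm ℂ L M).isRefl.nondegenerate_iff_separatingLeft.2
    (LinearMap.separatingLeft_iff_ker_eq_bot.2 hker)

lemma exists_casimir [FiniteDimensional ℂ M] (h : traceForm ℂ L M ≠ 0) :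
    ∃ C : Module.End ℂ M, LinearMap.trace ℂ M C ≠ 0 ∧ (∀ (x : L) m, C ⁅x, m⁆ = ⁅x, C m⁆) ∧
      ∀ f : M →ₗ[ℂ] ℂ, (∀ (x : L) m, f ⁅x, m⁆ = 0) → ∀ m, f (C m) = 0 := by
  classical
  have hB := traceForm_nondeg h
  set B : LinearMap.BilinForm ℂ L := traceForm ℂ L M with hBdef
  have hB : B.Nondegenerate := hB
  let b := Module.finBasis ℂ L
  let b' := B.dualBasis hB b
  have hsym : B.IsSymm := ⟨traceForm_comm ℂ L M⟩
  have e1 : ∀ y, y = ∑ j, B y (b j) • b' j := by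
    intro y
    conv_lhs => rw [← b'.sum_repr y]
    simp [b', LinearMap.BilinForm.dualBasis_repr_apply]
  have e2 : ∀ y, y = ∑ j, B y (b' j) • b j := by
    intro y
    conv_lhs => rw [← b.sum_repr y]
    refine Finset.sum_congr rfl fun j _ => ?_
    congr 1
    conv_rhs => rw [← b.sum_repr y]
    rw [map_sum, LinearMap.sum_apply]
    simp only [map_smul, LinearMap.smul_apply]
    rw [Finset.sum_eq_single j]
    · rw [LinearMap.BilinForm.apply_dualBasis_right hB hsym, if_pos rfl]; simp
    · intro i _ hij
      rw [LinearMap.BilinForm.apply_dualBasis_right hB hsym, if_neg hij]; simp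
    · simp
  refine ⟨∑ i, toEnd ℂ L M (b i) * toEnd ℂ L M (b' i), ?_, ?_, ?_⟩
  · have : ∀ i, LinearMap.trace ℂ M (toEnd ℂ L M (b i) * toEnd ℂ L M (b' i)) = 1 := by
      intro i
      have := LinearMap.BilinForm.apply_dualBasis_right hB hsym b i i
      rw [if_pos rfl] at this
      exact this
    rw [map_sum]
    simp only [this]
    have hn := LieAlgebra.IsSimple.nontrivial ℂ L
    have := Module.finrank_pos (R := ℂ) (M := L)
    simp
    omega
  · intro x m
    have h1 : ∀ i, ⁅x, b i⁆ = ∑ j, B ⁅x, b i⁆ (b' j) • b j := fun i => e2 _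
    have h2 : ∀ i, ⁅x, b' i⁆ = ∑ j, B ⁅x, b' i⁆ (b j) • b' j := fun i => e1 _
    have h3 : ∀ i j, B ⁅x, b' i⁆ (b j) = - B ⁅x, b j⁆ (b' i) := by
      intro i j
      rw [hBdef, traceForm_apply_lie_apply', traceForm_comm]
    have key : ∑ i, (⁅⁅x, b i⁆, ⁅b' i, m⁆⁆ + ⁅b i, ⁅⁅x, b' i⁆, m⁆⁆) = 0 := by
      rw [Finset.sum_add_distrib]
      have a1 : ∑ i, ⁅⁅x, b i⁆, ⁅b' i, m⁆⁆ = ∑ i, ∑ j, B ⁅x, b i⁆ (b' j) • ⁅b j, ⁅b' i, m⁆⁆ := by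
        refine Finset.sum_congr rfl fun i _ => ?_
        conv_lhs => rw [h1 i]
        simp [sum_lie]
      have a2 : ∑ i, ⁅b i, ⁅⁅x, b' i⁆, m⁆⁆ = ∑ i, ∑ j, -(B ⁅x, b j⁆ (b' i) • ⁅b i, ⁅b' j, m⁆⁆) := by
        refine Finset.sum_congr rfl fun i _ => ?_
        conv_lhs => rw [h2 i]
        simp [sum_lie, lie_sum, h3]
      rw [a1, a2, Finset.sum_comm, ← Finset.sum_add_distrib]
      refine Finset.sum_eq_zero fun i _ => ?_
      rw [← Finset.sum_add_distrib]
      refine Finset.sum_eq_zero fun j _ => ?_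
      simp
    simp only [LinearMap.sum_apply, Module.End.mul_apply, toEnd_apply_apply, lie_sum]
    rw [eq_comm, ← sub_eq_zero, ← Finset.sum_sub_distrib, ← key]
    refine Finset.sum_congr rfl fun i _ => ?_
    simp only [leibniz_lie x (b i), leibniz_lie x (b' i), lie_add]
    abel
  · intro f hf m
    simp [hf]

/-- Main lemma: invariants surject onto coinvariants. -/
lemma exists_invariant : ∀ (d : ℕ) (M : Type) [AddCommGroup M] [Module ℂ M] [LieRingModule L M]
    [LieModule ℂ L M] [FiniteDimensional ℂ M], Module.finrank ℂ M = d →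
    ∀ f : M →ₗ[ℂ] ℂ, f ≠ 0 → (∀ (x : L) m, f ⁅x, m⁆ = 0) →
      ∃ m, f m ≠ 0 ∧ ∀ x : L, ⁅x, m⁆ = 0 := by
  intro d
  induction d using Nat.strong_induction_on with
  | _ d ih =>
  intro M _ _ _ _ _ hd f hf0 hf
  by_cases h : traceForm ℂ L M = 0
  · obtain ⟨m, hm⟩ : ∃ m, f m ≠ 0 := by
      by_contra hcon
      push Not at hcon
      exact hf0 (LinearMap.ext hcon)
    exact ⟨m, hm, fun x => trivial_of_traceForm h x m⟩
  obtain ⟨C, hCtr, hC, hCf⟩ := exists_casimir h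
  obtain ⟨k, hk⟩ := (Filter.eventually_atTop.1 (LinearMap.eventually_isCompl_ker_pow_range_pow C))
  have hk := hk (k + 1) (by omega)
  have hCk : ∀ (j : ℕ) (x : L) m, (C ^ j) ⁅x, m⁆ = ⁅x, (C ^ j) m⁆ := by
    intro j x
    induction j with
    | zero => simp
    | succ j ihj =>
      intro m
      rw [pow_succ, Module.End.mul_apply, hC, ihj, Module.End.mul_apply]
  let N : LieSubmodule ℂ L M :=
    { LinearMap.ker (C ^ (k + 1)) with
      lie_mem := by
        intro x m hm
        change m ∈ LinearMap.ker (C ^ (k + 1)) at hm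
        change ⁅x, m⁆ ∈ LinearMap.ker (C ^ (k + 1))
        rw [LinearMap.mem_ker] at *
        rw [hCk, hm, lie_zero] }
  have hN : (N : Submodule ℂ M) = LinearMap.ker (C ^ (k + 1)) := rfl
  have hlt : Module.finrank ℂ N < d := by
    rw [← hd]
    apply Submodule.finrank_lt (s := (N : Submodule ℂ M))
    intro htop
    apply hCtr
    apply IsNilpotent.eq_zero
    apply LinearMap.isNilpotent_trace_of_isNilpotent
    exact ⟨k + 1, LinearMap.ker_eq_top.1 (hN ▸ htop)⟩
  obtain ⟨m, hm, hm'⟩ := ih _ hlt N rfl (f ∘ₗ (N : Submodule ℂ M).subtype) (by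
    intro h0
    apply hf0
    ext m
    obtain ⟨a, ha, c, hc, rfl⟩ := Submodule.mem_sup.1
      (show m ∈ LinearMap.ker (C ^ (k + 1)) ⊔ LinearMap.range (C ^ (k + 1)) by
        rw [hk.sup_eq_top]; trivial)
    obtain ⟨c, rfl⟩ := hc
    rw [map_add, pow_succ', Module.End.mul_apply, hCf f hf]
    have := LinearMap.congr_fun h0 (⟨a, ha⟩ : N)
    rw [add_zero]
    exact this) (fun x m => hf x m)
  exact ⟨m, hm, fun x => by simpa using congrArg Subtype.val (hm' x)⟩

lemma exists_reynolds [FiniteDimensional ℂ M] :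
    ∃ P : M →ₗ[ℂ] M, (∀ m (x : L), ⁅x, P m⁆ = 0) ∧ (∀ m, (∀ x : L, ⁅x, m⁆ = 0) → P m = m) ∧
      ∀ (N : LieSubmodule ℂ L M) m, m ∈ N → P m ∈ N := by
  let I : Submodule ℂ M := maxTrivSubmodule ℂ L M
  let K : Submodule ℂ M := Submodule.span ℂ {u | ∃ (x : L) (m : M), ⁅x, m⁆ = u}
  have hI : ∀ m, m ∈ I ↔ ∀ x : L, ⁅x, m⁆ = 0 := fun m => Iff.rfl
  -- decomposition inside submodules
  have dec : ∀ (N : LieSubmodule ℂ L M) m, m ∈ N → ∃ a ∈ N, a ∈ I ∧ m - a ∈ K := by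
    intro N m hm
    let S : Submodule ℂ N := I.comap (N : Submodule ℂ M).subtype ⊔
      Submodule.span ℂ {u | ∃ (x : L) (m : N), ⁅x, m⁆ = u}
    have hS : S = ⊤ := by
      by_contra hne
      obtain ⟨f, hf0, hf⟩ := Submodule.exists_le_ker_of_lt_top S (lt_top_iff_ne_top.2 hne)
      obtain ⟨a, ha, ha'⟩ := exists_invariant (L := L) _ N rfl f hf0 (fun x m => by
        apply hf
        exact Submodule.mem_sup_right (Submodule.subset_span ⟨x, m, rfl⟩))
      apply ha
      apply hf
      refine Submodule.mem_sup_left ?_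
      change (a : M) ∈ I
      rw [hI]
      intro x
      simpa using congrArg Subtype.val (ha' x)
    obtain ⟨a, ha, c, hc, hac⟩ := Submodule.mem_sup.1 (show (⟨m, hm⟩ : N) ∈ S by rw [hS]; trivial)
    refine ⟨a, a.2, ha, ?_⟩
    have : m - a = c := by rw [sub_eq_iff_eq_add, add_comm]; simpa using (congrArg Subtype.val hac).symm
    rw [this]
    have hle : Submodule.span ℂ {u | ∃ (x : L) (m : N), ⁅x, m⁆ = u} ≤
        K.comap (N : Submodule ℂ M).subtype := by
      rw [Submodule.span_le]
      rintro _ ⟨x, m, rfl⟩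
      exact Submodule.subset_span ⟨x, m, by simp⟩
    exact hle hc
  have hdis : Disjoint I K := by
    rw [Submodule.disjoint_def]
    intro m hmI hmK
    by_contra hm0
    obtain ⟨g, hg, hg'⟩ := exists_invariant (L := L) _ (M →ₗ[ℂ] ℂ) rfl
      (Module.Dual.eval ℂ M m) (fun h0 => hm0 ((Module.forall_dual_apply_eq_zero_iff ℂ m).1 (LinearMap.congr_fun h0)))
      (fun x g => by
        change -(g ⁅x, m⁆) = 0
        rw [hmI x]; simp)
    apply hg
    have : K ≤ LinearMap.ker g := by
      rw [Submodule.span_le]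
      rintro _ ⟨x, u, rfl⟩
      have := LinearMap.congr_fun (hg' x) u
      simpa using this
    exact this hmK
  have hcod : Codisjoint I K := by
    rw [codisjoint_iff, eq_top_iff]
    intro m _
    obtain ⟨a, -, ha, hk⟩ := dec ⊤ m trivial
    exact Submodule.mem_sup.2 ⟨a, ha, _, hk, by abel⟩
  have hc : IsCompl I K := ⟨hdis, hcod⟩
  have hP1 : ∀ m ∈ I, (I.projectionOnto K hc m : M) = m := fun m hm =>
    congrArg Subtype.val (Submodule.projectionOnto_apply_left hc ⟨m, hm⟩)
  refine ⟨I.subtype ∘ₗ I.projectionOnto K hc, ?_, ?_, ?_⟩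
  · intro m x
    exact (I.projectionOnto K hc m).2 x
  · intro m hm
    exact hP1 m hm
  · intro N m hm
    obtain ⟨a, haN, ha, hk⟩ := dec N m hm
    have : (I.projectionOnto K hc m : M) = a := by
      have h0 : I.projectionOnto K hc (m - a) = 0 := by
        exact (Submodule.projectionOnto_apply_eq_zero_iff hc).2 hk
      rw [map_sub, sub_eq_zero] at h0
      rw [h0]
      exact hP1 a ha
    simpa [this] using haN
end Casimir
end FusionAux
namespace FusionAux

section Generic
variable {n : ℕ} {X Y : Type} [AddCommGroup X] [Module ℂ X] [AddCommGroup Y] [Module ℂ Y]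

/-- Polynomial families of vectors. -/
def IsPoly (s : (Fin n → ℂ) → X) : Prop :=
  ∀ ξ : X →ₗ[ℂ] ℂ, ∃ p : MvPolynomial (Fin n) ℂ, ∀ z, MvPolynomial.eval z p = ξ (s z)

lemma IsPoly.const (u : X) : IsPoly (fun _ : Fin n → ℂ => u) :=
  fun ξ => ⟨MvPolynomial.C (ξ u), fun z => by simp⟩

lemma IsPoly.add {s t : (Fin n → ℂ) → X} (hs : IsPoly s) (ht : IsPoly t) :
    IsPoly (fun z => s z + t z) := by
  intro ξ
  obtain ⟨p, hp⟩ := hs ξ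
  obtain ⟨q, hq⟩ := ht ξ
  exact ⟨p + q, fun z => by simp [hp, hq]⟩

lemma IsPoly.map {s : (Fin n → ℂ) → X} (hs : IsPoly s) (G : X →ₗ[ℂ] Y) :
    IsPoly (fun z => G (s z)) := fun ξ => hs (ξ ∘ₗ G)

lemma IsPoly.smul {s : (Fin n → ℂ) → X} (hs : IsPoly s) (q : MvPolynomial (Fin n) ℂ) :
    IsPoly (fun z => MvPolynomial.eval z q • s z) := by
  intro ξ
  obtain ⟨p, hp⟩ := hs ξ
  exact ⟨q * p, fun z => by simp [hp]⟩

lemma IsPoly.sum {ι : Type} (t : Finset ι) {s : ι → (Fin n → ℂ) → X}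
    (hs : ∀ i ∈ t, IsPoly (s i)) : IsPoly (fun z => ∑ i ∈ t, s i z) := by
  classical
  induction t using Finset.induction_on with
  | empty => simpa using IsPoly.const (0 : X)
  | insert a t ha ih =>
    simp only [Finset.sum_insert ha]
    exact (hs a (by simp)).add (ih fun i hi => hs i (by simp [hi]))

lemma IsPoly.ofApply [FiniteDimensional ℂ X] {T : (Fin n → ℂ) → X →ₗ[ℂ] X}
    (hT : ∀ v, IsPoly (fun z => T z v)) : IsPoly T := by
  let b := Module.finBasis ℂ X
  have : T = fun z => ∑ j, (LinearMap.smulRightₗ (b.coord j)) (T z (b j)) := by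
    funext z
    refine b.ext fun i => ?_
    simp [LinearMap.smulRightₗ_apply, Finsupp.single_apply, ite_smul]
  rw [this]
  exact IsPoly.sum _ fun j _ => (hT (b j)).map _

lemma IsPoly.det [FiniteDimensional ℂ X] {T : (Fin n → ℂ) → X →ₗ[ℂ] X} (hT : IsPoly T) :
    ∃ D : MvPolynomial (Fin n) ℂ, ∀ z, MvPolynomial.eval z D = LinearMap.det (T z) := by
  classical
  let b := Module.finBasis ℂ X
  have h : ∀ i j, ∃ p : MvPolynomial (Fin n) ℂ, ∀ z, MvPolynomial.eval z p =
      LinearMap.toMatrix b b (T z) i j := by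
    intro i j
    obtain ⟨p, hp⟩ := hT (b.coord i ∘ₗ LinearMap.applyₗ (b j))
    exact ⟨p, fun z => by rw [hp, LinearMap.toMatrix_apply]; simp⟩
  choose p hp using h
  refine ⟨Matrix.det (Matrix.of p), fun z => ?_⟩
  rw [RingHom.map_det, ← LinearMap.det_toMatrix b]
  congr 1
  ext i j
  simp [hp]

/-- Polynomial sections of a filtration. -/
def Sec (F : (Fin n → ℂ) → ℕ → Submodule ℂ X) (i : ℕ) : Submodule ℂ ((Fin n → ℂ) → X) where
  carrier := {s | IsPoly s ∧ ∀ z, s z ∈ F z i}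
  add_mem' := fun ha hb => ⟨ha.1.add hb.1, fun z => add_mem (ha.2 z) (hb.2 z)⟩
  zero_mem' := ⟨IsPoly.const 0, fun z => zero_mem _⟩
  smul_mem' := fun c s hs =>
    ⟨hs.1.map (c • LinearMap.id), fun z => Submodule.smul_mem _ c (hs.2 z)⟩

lemma exists_transport [FiniteDimensional ℂ X] (F : (Fin n → ℂ) → ℕ → Submodule ℂ X)
    (hmono : ∀ z, Monotone (F z))
    (hsec : ∀ z₀ i u, u ∈ F z₀ i → ∃ s ∈ Sec F i, s z₀ = u)
    (z₀ : Fin n → ℂ) (N : ℕ) (hN : ∀ i, F z₀ i ≤ F z₀ N) :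
    ∃ T : (Fin n → ℂ) → X →ₗ[ℂ] X, IsPoly T ∧ T z₀ = LinearMap.id ∧
      ∀ z i, ∀ u ∈ F z₀ i, T z u ∈ F z i := by
  -- linear choice of sections
  have hσ : ∀ i, ∃ σ : X →ₗ[ℂ] ((Fin n → ℂ) → X), (∀ u, σ u ∈ Sec F i) ∧
      (∀ u ∈ F z₀ i, σ u z₀ = u) := by
    intro i
    let ev : Sec F i →ₗ[ℂ] F z₀ i :=
      LinearMap.codRestrict _ (LinearMap.proj z₀ ∘ₗ (Sec F i).subtype) (fun s => s.2.2 z₀)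
    have hev : LinearMap.range ev = ⊤ := by
      rw [LinearMap.range_eq_top]
      rintro ⟨u, hu⟩
      obtain ⟨s, hs, hsu⟩ := hsec z₀ i u hu
      exact ⟨⟨s, hs⟩, Subtype.ext hsu⟩
    obtain ⟨τ, hτ⟩ := ev.exists_rightInverse_of_surjective hev
    obtain ⟨q, hq⟩ := (F z₀ i).exists_isCompl
    refine ⟨(Sec F i).subtype ∘ₗ τ ∘ₗ (F z₀ i).projectionOnto q hq, fun u => ?_, fun u hu => ?_⟩
    · exact (τ _).2
    · have h1 : (F z₀ i).projectionOnto q hq u = ⟨u, hu⟩ :=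
        Submodule.projectionOnto_apply_left hq ⟨u, hu⟩
      have h2 := congrArg Subtype.val (LinearMap.congr_fun hτ ⟨u, hu⟩)
      simp only [LinearMap.comp_apply, h1]
      exact h2
  choose σ hσ1 hσ2 using hσ
  -- `q i` : projection onto `F z₀ i`
  let q : ℕ → X →ₗ[ℂ] X := fun i => LinearMap.proj z₀ ∘ₗ σ i
  have hq1 : ∀ i u, q i u ∈ F z₀ i := fun i u => (hσ1 i u).2 z₀
  have hq2 : ∀ i, ∀ u ∈ F z₀ i, q i u = u := fun i u hu => hσ2 i u hu
  -- `r i` = successive differences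
  let r : ℕ → X →ₗ[ℂ] X := fun i => q i - (if i = 0 then 0 else q (i - 1))
  have hr1 : ∀ i u, r i u ∈ F z₀ i := by
    intro i u
    by_cases h : i = 0
    · simpa [r, h] using hq1 0 u
    · simp only [r, h, if_false, LinearMap.sub_apply]
      exact sub_mem (hq1 i u) (hmono z₀ (Nat.sub_le i 1) (hq1 (i - 1) u))
  have hr2 : ∀ i j, j < i → ∀ u ∈ F z₀ j, r i u = 0 := by
    intro i j hj u hu
    have h : i ≠ 0 := by omega
    simp only [r, h, if_false, LinearMap.sub_apply]
    rw [hq2 i u (hmono z₀ (by omega) hu), hq2 (i - 1) u (hmono z₀ (by omega) hu), sub_self]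
  have hr3 : ∀ K, ∑ i ∈ Finset.range (K + 1), r i = q K := by
    intro K
    induction K with
    | zero => simp [r]
    | succ K ih => rw [Finset.sum_range_succ, ih]; simp [r]
  let T : (Fin n → ℂ) → X →ₗ[ℂ] X := fun z =>
    (∑ i ∈ Finset.range (N + 1), LinearMap.proj z ∘ₗ σ i ∘ₗ r i) + (LinearMap.id - q N)
  have hTapp : ∀ z u, T z u = (∑ i ∈ Finset.range (N + 1), σ i (r i u) z) + (u - q N u) := by
    intro z u
    simp [T]
  refine ⟨T, IsPoly.ofApply fun u => ?_, ?_, ?_⟩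
  · simp only [hTapp]
    exact (IsPoly.sum _ fun i _ => (hσ1 i (r i u)).1).add (IsPoly.const _)
  · ext u
    rw [hTapp]
    have : ∀ i ∈ Finset.range (N + 1), σ i (r i u) z₀ = r i u := fun i _ => hσ2 i _ (hr1 i u)
    rw [Finset.sum_congr rfl this, ← LinearMap.sum_apply, hr3]
    simp
  · intro z j u hu
    rw [hTapp, hq2 N u (hN j hu), sub_self, add_zero]
    refine Submodule.sum_mem _ fun i _ => ?_
    by_cases hij : j < i
    · rw [hr2 i j hij u hu, map_zero]; exact zero_mem _
    · exact hmono z (not_lt.1 hij) ((hσ1 i _).2 z)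

lemma exists_generic_point [FiniteDimensional ℂ X] (F : (Fin n → ℂ) → ℕ → Submodule ℂ X)
    (hmono : ∀ z, Monotone (F z)) :
    ∃ (z₀ : Fin n → ℂ) (N : ℕ), (∀ i, F z₀ i ≤ F z₀ N) ∧
      ∀ z, (∀ i, Module.finrank ℂ (F z₀ i) ≤ Module.finrank ℂ (F z i)) →
        ∀ i, Module.finrank ℂ (F z i) = Module.finrank ℂ (F z₀ i) := by
  classical
  have hfm : ∀ z i j, i ≤ j → Module.finrank ℂ (F z i) ≤ Module.finrank ℂ (F z j) :=
    fun z i j h => Submodule.finrank_mono (hmono z h)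
  -- maximal possible dimension
  let P : ℕ → Prop := fun e => ∃ z i, Module.finrank ℂ (F z i) = e
  have hPb : ∀ e, P e → e ≤ Module.finrank ℂ X := by
    rintro _ ⟨z, i, rfl⟩
    exact Submodule.finrank_le _
  let e := Nat.findGreatest P (Module.finrank ℂ X)
  have hPe : P e := Nat.findGreatest_spec (P := P) (hPb _ ⟨0, 0, rfl⟩) ⟨0, 0, rfl⟩
  have he : ∀ z i, Module.finrank ℂ (F z i) ≤ e := fun z i =>
    Nat.le_findGreatest (hPb _ ⟨z, i, rfl⟩) ⟨z, i, rfl⟩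
  obtain ⟨zs, N, hzs⟩ := hPe
  let S : (Fin n → ℂ) → ℕ := fun z => ∑ i ∈ Finset.range (N + 1), Module.finrank ℂ (F z i)
  let Q : ℕ → Prop := fun m => ∃ z, Module.finrank ℂ (F z N) = e ∧ S z = m
  have hQb : ∀ m, Q m → m ≤ (N + 1) * e := by
    rintro _ ⟨z, -, rfl⟩
    calc S z ≤ ∑ i ∈ Finset.range (N + 1), e := Finset.sum_le_sum fun i _ => he z i
      _ = _ := by simp
  have hQ0 : Q (S zs) := ⟨zs, hzs, rfl⟩
  let m := Nat.findGreatest Q ((N + 1) * e)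
  have hQm : Q m := Nat.findGreatest_spec (P := Q) (hQb _ hQ0) hQ0
  have hm : ∀ z, Module.finrank ℂ (F z N) = e → S z ≤ m := fun z hz =>
    Nat.le_findGreatest (hQb _ ⟨z, hz, rfl⟩) ⟨z, hz, rfl⟩
  obtain ⟨z₀, h0, hS⟩ := hQm
  refine ⟨z₀, N, fun i => ?_, fun z hz => ?_⟩
  · rcases le_total i N with h | h
    · exact hmono z₀ h
    · exact (Submodule.eq_of_le_of_finrank_le (hmono z₀ h) ((he z₀ i).trans h0.ge)).ge
  · have hzN : Module.finrank ℂ (F z N) = e := le_antisymm (he z N) (h0 ▸ hz N)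
    intro i
    rcases le_or_gt i N with h | h
    · by_contra hne
      have hlt : S z₀ < S z := Finset.sum_lt_sum (fun j _ => hz j)
        ⟨i, by simp; omega, lt_of_le_of_ne (hz i) (Ne.symm hne)⟩
      have := hm z hzN
      omega
    · have a1 := hfm z N i h.le
      have a2 := hfm z₀ N i h.le
      have a3 := he z i
      have a4 := he z₀ i
      omega

lemma generic_iso {L : Type} [LieRing L] [LieAlgebra ℂ L] [LieAlgebra.IsSimple ℂ L]
    [FiniteDimensional ℂ L] [LieRingModule L X] [LieModule ℂ L X]
    [FiniteDimensional ℂ X] (F : (Fin n → ℂ) → ℕ → Submodule ℂ X)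
    (hmono : ∀ z, Monotone (F z))
    (hsec : ∀ z₀ i u, u ∈ F z₀ i → ∃ s ∈ Sec F i, s z₀ = u)
    (hinv : ∀ z i (x : L) u, u ∈ F z i → ⁅x, u⁆ ∈ F z i) :
    ∃ D : MvPolynomial (Fin n) ℂ, D ≠ 0 ∧ ∀ z₁ z₂ : Fin n → ℂ,
      MvPolynomial.eval z₁ D ≠ 0 → MvPolynomial.eval z₂ D ≠ 0 →
      ∃ φ : X ≃ₗ[ℂ] X, (∀ (x : L) u, φ ⁅x, u⁆ = ⁅x, φ u⁆) ∧
        ∀ i, Submodule.map (φ : X →ₗ[ℂ] X) (F z₁ i) = F z₂ i := by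
  obtain ⟨z₀, N, hN, hz₀⟩ := exists_generic_point F hmono
  obtain ⟨T, hT, hT0, hTF⟩ := exists_transport F hmono hsec z₀ N hN
  obtain ⟨P, hP1, hP2, hP3⟩ := exists_reynolds (L := L) (M := X →ₗ[ℂ] X)
  obtain ⟨D, hD⟩ := (hT.map P).det
  have hPF : ∀ z i, ∀ u ∈ F z₀ i, P (T z) u ∈ F z i := by
    intro z i
    let H : LieSubmodule ℂ L (X →ₗ[ℂ] X) :=
      { carrier := {f | ∀ u ∈ F z₀ i, f u ∈ F z i}
        add_mem' := fun ha hb u hu => add_mem (ha u hu) (hb u hu)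
        zero_mem' := fun u _ => zero_mem _
        smul_mem' := fun c f hf u hu => Submodule.smul_mem _ c (hf u hu)
        lie_mem := by
          intro x f hf u hu
          change ⁅x, f⁆ u ∈ F z i
          rw [LieHom.lie_apply]
          exact sub_mem (hinv z i x _ (hf u hu)) (hf _ (hinv z₀ i x u hu)) }
    exact hP3 H (T z) (hTF z i)
  have hPT : ∀ z (x : L) u, P (T z) ⁅x, u⁆ = ⁅x, P (T z) u⁆ := by
    intro z x u
    have := LinearMap.congr_fun (hP1 (T z) x) u
    rw [LieHom.lie_apply, LinearMap.zero_apply, sub_eq_zero] at this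
    exact this.symm
  have key : ∀ z, MvPolynomial.eval z D ≠ 0 → ∃ φ : X ≃ₗ[ℂ] X,
      (∀ (x : L) u, φ ⁅x, u⁆ = ⁅x, φ u⁆) ∧
        ∀ i, Submodule.map (φ : X →ₗ[ℂ] X) (F z₀ i) = F z i := by
    intro z hz
    rw [hD] at hz
    let φ : X ≃ₗ[ℂ] X := LinearMap.equivOfDetNeZero (P (T z)) hz
    have hφ : ∀ u, φ u = P (T z) u := fun u => rfl
    have hle : ∀ i, Submodule.map (φ : X →ₗ[ℂ] X) (F z₀ i) ≤ F z i := by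
      rintro i _ ⟨u, hu, rfl⟩
      exact hPF z i u hu
    have hfr : ∀ i, Module.finrank ℂ (Submodule.map (φ : X →ₗ[ℂ] X) (F z₀ i)) =
        Module.finrank ℂ (F z₀ i) := fun i => LinearEquiv.finrank_map_eq φ _
    refine ⟨φ, fun x u => hPT z x u, fun i => ?_⟩
    apply Submodule.eq_of_le_of_finrank_eq (hle i)
    rw [hfr, hz₀ z (fun j => ?_) i]
    rw [← hfr]
    exact Submodule.finrank_mono (hle j)
  refine ⟨D, ?_, ?_⟩
  · rintro rfl
    have h1 := hD z₀
    rw [hT0, hP2 _ (fun x => by ext u; simp)] at h1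
    simp at h1
  · intro z₁ z₂ h1 h2
    obtain ⟨φ₁, a1, b1⟩ := key z₁ h1
    obtain ⟨φ₂, a2, b2⟩ := key z₂ h2
    refine ⟨φ₁.symm.trans φ₂, fun x u => ?_, fun i => ?_⟩
    · have : φ₁.symm ⁅x, u⁆ = ⁅x, φ₁.symm u⁆ := by
        rw [LinearEquiv.symm_apply_eq, a1, LinearEquiv.apply_symm_apply]
      simp [this, a2]
    · rw [← b1 i, ← b2 i, ← Submodule.map_comp]
      congr 1
      ext u
      simp
end Generic
end FusionAux

namespace FusionAux
open Fusion
section Tensor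
variable {n : ℕ} (π : Fin n → Type) [∀ i, AddCommGroup (π i)] [∀ i, Module ℂ (π i)]

lemma slotE_add (i : Fin n) (g h : Module.End ℂ (π i)) :
    slotE π i (g + h) = slotE π i g + slotE π i h :=
  PiTensorProduct.map_update_add _ _ _ _

lemma slotE_smul (i : Fin n) (c : ℂ) (g : Module.End ℂ (π i)) :
    slotE π i (c • g) = c • slotE π i g :=
  PiTensorProduct.map_update_smul _ _ _ _

lemma slotE_mul (i : Fin n) (g h : Module.End ℂ (π i)) :
    slotE π i g * slotE π i h = slotE π i (g * h) := by
  rw [slotE, slotE, slotE, ← PiTensorProduct.map_mul]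
  congr 1
  funext j
  by_cases hj : j = i
  · subst hj; simp
  · simp [Function.update_of_ne hj]; rfl

lemma slotE_comm {i j : Fin n} (hij : i ≠ j) (g : Module.End ℂ (π i)) (h : Module.End ℂ (π j)) :
    slotE π i g * slotE π j h = slotE π j h * slotE π i g := by
  rw [slotE, slotE, ← PiTensorProduct.map_mul, ← PiTensorProduct.map_mul]
  congr 1
  funext k
  by_cases hk : k = i
  · subst hk
    simp [Function.update_of_ne hij]
    rfl
  · by_cases hk' : k = j
    · subst hk'
      simp [Function.update_of_ne hk]
      rfl
    · simp [Function.update_of_ne hk, Function.update_of_ne hk']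

variable {L : Type} [LieRing L] [LieAlgebra ℂ L]
    [∀ i, LieRingModule L (π i)] [∀ i, LieModule ℂ L (π i)]

/-- The diagonal action. -/
noncomputable def diag (x : L) : Module.End ℂ (⨂[ℂ] i, π i) :=
  ∑ i, slotE π i (LieModule.toEnd ℂ L (π i) x)

lemma diag_add (x y : L) : diag π (x + y) = diag π x + diag π y := by
  simp only [diag, map_add, slotE_add, Finset.sum_add_distrib]

lemma diag_smul (c : ℂ) (x : L) : diag π (c • x) = c • diag π x := by
  simp only [diag, map_smul, slotE_smul, Finset.smul_sum]

lemma diag_lie (x y : L) : diag π ⁅x, y⁆ + diag π y * diag π x = diag π x * diag π y := by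
  have h1 : diag π ⁅x, y⁆ = ∑ i, (slotE π i (LieModule.toEnd ℂ L (π i) x) *
      slotE π i (LieModule.toEnd ℂ L (π i) y) - slotE π i (LieModule.toEnd ℂ L (π i) y) *
      slotE π i (LieModule.toEnd ℂ L (π i) x)) := by
    refine Finset.sum_congr rfl fun i _ => ?_
    rw [eq_sub_iff_add_eq, slotE_mul, slotE_mul, ← slotE_add]
    congr 1
    ext m
    simp
  rw [h1, ← eq_sub_iff_add_eq]
  simp only [diag, Finset.sum_mul_sum]
  rw [Finset.sum_comm (f := fun i j => slotE π i (LieModule.toEnd ℂ L (π i) y) *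
      slotE π j (LieModule.toEnd ℂ L (π j) x)), ← Finset.sum_sub_distrib]
  refine Finset.sum_congr rfl fun i _ => ?_
  rw [← Finset.sum_sub_distrib, Finset.sum_eq_single i]
  · intro j _ hj
    rw [slotE_comm π hj.symm, sub_self]
  · simp

/-- The diagonal Lie module structure. -/
@[reducible]
noncomputable def diagRingModule : LieRingModule L (⨂[ℂ] i, π i) where
  bracket x u := diag π x u
  add_lie x y u := by change diag π (x + y) u = _; rw [diag_add]; rfl
  lie_add x u w := map_add _ _ _
  leibniz_lie x y u := by
    change diag π x (diag π y u) = diag π ⁅x, y⁆ u + diag π y (diag π x u)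
    exact (LinearMap.congr_fun (diag_lie π x y) u).symm

lemma diagModule : letI := diagRingModule π (L := L); LieModule ℂ L (⨂[ℂ] i, π i) :=
  letI := diagRingModule π (L := L)
  { smul_lie := fun c x u => by
      change diag π (c • x) u = c • diag π x u
      rw [diag_smul]; rfl
    lie_smul := fun c x u => map_smul (diag π x) c u }

lemma word_section (ρ : ∀ i, L → Module.End ℂ (π i)) (v : ∀ i, π i) (z₀ : Fin n → ℂ)
    (u : ⨂[ℂ] i, π i) (d : ℕ) (h : IsWord π ρ v z₀ u d) :
    ∃ s : (Fin n → ℂ) → ⨂[ℂ] i, π i, IsPoly s ∧ (∀ z, IsWord π ρ v z (s z) d) ∧ s z₀ = u := by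
  induction h with
  | base => exact ⟨fun _ => PiTensorProduct.tprod ℂ v, IsPoly.const _, fun _ => IsWord.base, rfl⟩
  | step x k _ ih =>
    obtain ⟨s, hs, hw, hu⟩ := ih
    refine ⟨fun z => monAct π ρ z k x (s z), ?_, fun z => (hw z).step x k, by simp [hu]⟩
    have : (fun z => monAct π ρ z k x (s z)) = fun z => ∑ i,
        MvPolynomial.eval z ((MvPolynomial.X i : MvPolynomial (Fin n) ℂ) ^ k) •
          slotE π i (ρ i x) (s z) := by
      funext z
      simp [monAct]
    rw [this]
    exact IsPoly.sum _ fun i _ => (hs.map _).smul _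

lemma F_section (ρ : ∀ i, L → Module.End ℂ (π i)) (v : ∀ i, π i) (z₀ : Fin n → ℂ) (i : ℕ)
    (u : ⨂[ℂ] i, π i) (hu : u ∈ F π ρ v z₀ i) : ∃ s ∈ Sec (F π ρ v) i, s z₀ = u := by
  have : F π ρ v z₀ i ≤ (Sec (F π ρ v) i).map (LinearMap.proj z₀) := by
    rw [F, Submodule.span_le]
    rintro u ⟨d, hd, hw⟩
    obtain ⟨s, hs, hw, hu⟩ := word_section π ρ v z₀ u d hw
    exact ⟨s, ⟨hs, fun z => Submodule.subset_span ⟨d, hd, hw z⟩⟩, hu⟩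
  exact this hu

end Tensor
end FusionAux

open Fusion in
/-- For a simple Lie algebra `𝔤` and cyclic finite-dimensional `𝔤`-modules,
there is a nonempty Zariski open subset of `ℂⁿ∖Δ` (the complement of the zero locus of a nonzero
polynomial `D`) over which the filtered tensor products are all isomorphic as filtered
`𝔤`-modules. -/
theorem filtered_tensor_product_generic_independence
    {L : Type} [LieRing L] [LieAlgebra ℂ L] [LieAlgebra.IsSimple ℂ L]
    [FiniteDimensional ℂ L]
    (n : ℕ) (π : Fin n → Type) [∀ i, AddCommGroup (π i)] [∀ i, Module ℂ (π i)]
    [∀ i, LieRingModule L (π i)] [∀ i, LieModule ℂ L (π i)]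
    [∀ i, FiniteDimensional ℂ (π i)]
    (v : ∀ i, π i)
    (hcyc : ∀ i, ∀ N : LieSubmodule ℂ L (π i), v i ∈ N → N = ⊤) :
    ∃ D : MvPolynomial (Fin n) ℂ, D ≠ 0 ∧
      ∀ z₁ z₂ : Fin n → ℂ, Function.Injective z₁ → Function.Injective z₂ →
        MvPolynomial.eval z₁ D ≠ 0 → MvPolynomial.eval z₂ D ≠ 0 →
        ∃ φ : (⨂[ℂ] i, π i) ≃ₗ[ℂ] ⨂[ℂ] i, π i,
          (∀ (x : L) (u : ⨂[ℂ] i, π i),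
            φ ((∑ i, slotE π i (LieModule.toEnd ℂ L (π i) x)) u) =
              (∑ i, slotE π i (LieModule.toEnd ℂ L (π i) x)) (φ u)) ∧
          (∀ i : ℕ,
            Submodule.map (φ : (⨂[ℂ] i, π i) →ₗ[ℂ] ⨂[ℂ] i, π i)
              (F π (fun i x => LieModule.toEnd ℂ L (π i) x) v z₁ i) =
            F π (fun i x => LieModule.toEnd ℂ L (π i) x) v z₂ i) := by
  letI := FusionAux.diagRingModule π (L := L)
  haveI := FusionAux.diagModule π (L := L)
  obtain ⟨D, hD, h⟩ := FusionAux.generic_iso (L := L)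
    (F π (fun i x => LieModule.toEnd ℂ L (π i) x) v)
    (fun z _ _ hij => F_mono π _ v z hij) (FusionAux.F_section π _ v)
    (fun z i x u hu => by
      have h0 := monAct_mem_F π (fun i (x : L) => LieModule.toEnd ℂ L (π i) x) v 0 x hu
      simp only [monAct, pow_zero, one_smul] at h0
      exact h0)
  exact ⟨D, hD, fun z₁ z₂ _ _ h1 h2 => h z₁ z₂ h1 h2⟩
end

section
/- Let 𝔲 ⊂ sl₂[t] be the Lie subalgebra spanned by the elements tⁱ⊗e and tⁱ⊗h for i ≥ 0 and tʲ⊗f for j ≥ 1, and let S be a finite-dimensional 𝔲-module on which 1⊗h acts diagonalizably. Then there exist a finite-dimensional sl₂[t]-module M and a 𝔲-equivariant linear map η : S → M with the following universal property: for every finite-dimensional sl₂[t]-module N and every 𝔲-equivariant linear map g : S → N there is a unique sl₂[t]-equivariant linear map φ : M → N with φ∘η = g. (Equivalently: the maximal finite-dimensional quotient Ind_fin(𝔲; S; sl₂[t]) of the induced sl₂[t]-module is finite-dimensional.) -/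
/-- A bundled `sl₂[t]`-module, given by the operators `E k`, `H k`, `F k` by which the
elements `t^k ⊗ e`, `t^k ⊗ h`, `t^k ⊗ f` act, subject to the commutation relations of the
current algebra `sl₂[t]`. -/
structure Sl2tMod where
  carrier : Type
  [acg : AddCommGroup carrier]
  [mod : Module ℂ carrier]
  E : ℕ → Module.End ℂ carrier
  H : ℕ → Module.End ℂ carrier
  F : ℕ → Module.End ℂ carrier
  rel_he : ∀ i j, H i * E j - E j * H i = (2 : ℂ) • E (i + j)
  rel_hf : ∀ i j, H i * F j - F j * H i = (-2 : ℂ) • F (i + j)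
  rel_ef : ∀ i j, E i * F j - F j * E i = H (i + j)
  rel_hh : ∀ i j, H i * H j = H j * H i
  rel_ee : ∀ i j, E i * E j = E j * E i
  rel_ff : ∀ i j, F i * F j = F j * F i

attribute [instance] Sl2tMod.acg Sl2tMod.mod

namespace DemazureAux

open Module

/-- `𝔲`-equivariance of a linear map. -/
def IsHom {S : Type} [AddCommGroup S] [Module ℂ S] (ES HS FS : ℕ → Module.End ℂ S)
    (N : Sl2tMod) (g : S →ₗ[ℂ] N.carrier) : Prop :=
  (∀ (i : ℕ) (s : S), g (ES i s) = N.E i (g s)) ∧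
  (∀ (i : ℕ) (s : S), g (HS i s) = N.H i (g s)) ∧
  (∀ (j : ℕ), 1 ≤ j → ∀ s : S, g (FS j s) = N.F j (g s))

/-- `N` is generated by the image of `g` under the single operator `F 0`. -/
def Gen {S : Type} [AddCommGroup S] [Module ℂ S]
    (N : Sl2tMod) (g : S →ₗ[ℂ] N.carrier) : Prop :=
  ∀ P : Submodule ℂ N.carrier, (∀ s, g s ∈ P) → (∀ x ∈ P, N.F 0 x ∈ P) → ∀ x, x ∈ P

lemma he' (N : Sl2tMod) (i j : ℕ) (x : N.carrier) :
    N.H i (N.E j x) = N.E j (N.H i x) + (2 : ℂ) • N.E (i + j) x := by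
  have h := congrArg (fun A : Module.End ℂ N.carrier => A x) (N.rel_he i j)
  simp only [LinearMap.sub_apply, Module.End.mul_apply, LinearMap.smul_apply] at h
  rw [← h]; abel

lemma hf' (N : Sl2tMod) (i j : ℕ) (x : N.carrier) :
    N.H i (N.F j x) = N.F j (N.H i x) + (-2 : ℂ) • N.F (i + j) x := by
  have h := congrArg (fun A : Module.End ℂ N.carrier => A x) (N.rel_hf i j)
  simp only [LinearMap.sub_apply, Module.End.mul_apply, LinearMap.smul_apply] at h
  rw [← h]; abel

lemma ef' (N : Sl2tMod) (i j : ℕ) (x : N.carrier) :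
    N.E i (N.F j x) = N.F j (N.E i x) + N.H (i + j) x := by
  have h := congrArg (fun A : Module.End ℂ N.carrier => A x) (N.rel_ef i j)
  simp only [LinearMap.sub_apply, Module.End.mul_apply] at h
  rw [← h]; abel

lemma ff' (N : Sl2tMod) (i j : ℕ) (x : N.carrier) :
    N.F i (N.F j x) = N.F j (N.F i x) :=
  congrArg (fun A : Module.End ℂ N.carrier => A x) (N.rel_ff i j)

/-- Restriction to a stable submodule. -/
def restr (N : Sl2tMod) (P : Submodule ℂ N.carrier)
    (hE : ∀ k, ∀ x ∈ P, N.E k x ∈ P) (hH : ∀ k, ∀ x ∈ P, N.H k x ∈ P)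
    (hF : ∀ k, ∀ x ∈ P, N.F k x ∈ P) : Sl2tMod where
  carrier := P
  E k := (N.E k).restrict (hE k)
  H k := (N.H k).restrict (hH k)
  F k := (N.F k).restrict (hF k)
  rel_he i j := by
    ext x
    exact congrArg (fun A : Module.End ℂ N.carrier => A x) (N.rel_he i j)
  rel_hf i j := by
    ext x
    exact congrArg (fun A : Module.End ℂ N.carrier => A x) (N.rel_hf i j)
  rel_ef i j := by
    ext x
    exact congrArg (fun A : Module.End ℂ N.carrier => A x) (N.rel_ef i j)
  rel_hh i j := by
    ext x
    exact congrArg (fun A : Module.End ℂ N.carrier => A x) (N.rel_hh i j)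
  rel_ee i j := by
    ext x
    exact congrArg (fun A : Module.End ℂ N.carrier => A x) (N.rel_ee i j)
  rel_ff i j := by
    ext x
    exact congrArg (fun A : Module.End ℂ N.carrier => A x) (N.rel_ff i j)

/-- Product of two modules. -/
def prd (M N : Sl2tMod) : Sl2tMod where
  carrier := M.carrier × N.carrier
  E k := (M.E k).prodMap (N.E k)
  H k := (M.H k).prodMap (N.H k)
  F k := (M.F k).prodMap (N.F k)
  rel_he i j := LinearMap.ext fun x => Prod.ext
    (congrArg (fun A : Module.End ℂ M.carrier => A x.1) (M.rel_he i j))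
    (congrArg (fun A : Module.End ℂ N.carrier => A x.2) (N.rel_he i j))
  rel_hf i j := LinearMap.ext fun x => Prod.ext
    (congrArg (fun A : Module.End ℂ M.carrier => A x.1) (M.rel_hf i j))
    (congrArg (fun A : Module.End ℂ N.carrier => A x.2) (N.rel_hf i j))
  rel_ef i j := LinearMap.ext fun x => Prod.ext
    (congrArg (fun A : Module.End ℂ M.carrier => A x.1) (M.rel_ef i j))
    (congrArg (fun A : Module.End ℂ N.carrier => A x.2) (N.rel_ef i j))
  rel_hh i j := LinearMap.ext fun x => Prod.ext
    (congrArg (fun A : Module.End ℂ M.carrier => A x.1) (M.rel_hh i j))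
    (congrArg (fun A : Module.End ℂ N.carrier => A x.2) (N.rel_hh i j))
  rel_ee i j := LinearMap.ext fun x => Prod.ext
    (congrArg (fun A : Module.End ℂ M.carrier => A x.1) (M.rel_ee i j))
    (congrArg (fun A : Module.End ℂ N.carrier => A x.2) (N.rel_ee i j))
  rel_ff i j := LinearMap.ext fun x => Prod.ext
    (congrArg (fun A : Module.End ℂ M.carrier => A x.1) (M.rel_ff i j))
    (congrArg (fun A : Module.End ℂ N.carrier => A x.2) (N.rel_ff i j))

/-- The zero module. -/
def zeroMod : Sl2tMod where
  carrier := PUnit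
  E _ := 0
  H _ := 0
  F _ := 0
  rel_he _ _ := by simp
  rel_hf _ _ := by simp
  rel_ef _ _ := by simp
  rel_hh _ _ := rfl
  rel_ee _ _ := rfl
  rel_ff _ _ := rfl

section
variable {S : Type} [AddCommGroup S] [Module ℂ S] {ES HS FS : ℕ → Module.End ℂ S}

/-- Every equivariant map has a smallest stable submodule around its image, which is generated
by the image under `F 0`. -/
lemma exists_gen (N : Sl2tMod) (g : S →ₗ[ℂ] N.carrier) (hg : IsHom ES HS FS N g) :
    ∃ P : Submodule ℂ N.carrier, (∀ s, g s ∈ P) ∧ (∀ k, ∀ x ∈ P, N.E k x ∈ P) ∧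
      (∀ k, ∀ x ∈ P, N.H k x ∈ P) ∧ (∀ k, ∀ x ∈ P, N.F k x ∈ P) ∧
      ∀ Q : Submodule ℂ N.carrier, (∀ s, g s ∈ Q) → (∀ x ∈ Q, N.F 0 x ∈ Q) → P ≤ Q := by
  obtain ⟨hgE, hgH, hgF⟩ := hg
  let P : Submodule ℂ N.carrier :=
    sInf {Q | (∀ s, g s ∈ Q) ∧ (∀ x ∈ Q, N.F 0 x ∈ Q)}
  have hmin : ∀ Q : Submodule ℂ N.carrier, (∀ s, g s ∈ Q) → (∀ x ∈ Q, N.F 0 x ∈ Q) → P ≤ Q :=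
    fun Q h1 h2 => sInf_le ⟨h1, h2⟩
  have hS : ∀ s, g s ∈ P := fun s => by
    rw [Submodule.mem_sInf]; exact fun Q hQ => hQ.1 s
  have hF0 : ∀ x ∈ P, N.F 0 x ∈ P := fun x hx => by
    rw [Submodule.mem_sInf] at hx ⊢
    exact fun Q hQ => hQ.2 x (hx Q hQ)
  have hF : ∀ k, ∀ x ∈ P, N.F k x ∈ P := by
    intro k
    rcases Nat.eq_zero_or_pos k with rfl | hk
    · exact hF0
    refine hmin (P.comap (N.F k)) (fun s => ?_) (fun x hx => ?_)
    · rw [Submodule.mem_comap, ← hgF k hk]; exact hS _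
    · rw [Submodule.mem_comap] at hx ⊢
      rw [ff']; exact hF0 _ hx
  have hH : ∀ k, ∀ x ∈ P, N.H k x ∈ P := by
    intro k x hx
    refine (hmin (P.comap (N.H k) ⊓ P) (fun s => ⟨?_, hS s⟩) (fun x hx => ⟨?_, hF0 x hx.2⟩) hx).1
    · show N.H k (g s) ∈ P
      rw [← hgH k]; exact hS _
    · have h1 : N.H k x ∈ P := hx.1
      show N.H k (N.F 0 x) ∈ P
      rw [hf']
      exact P.add_mem (hF0 _ h1) (P.smul_mem _ (hF _ _ hx.2))
  have hE : ∀ k, ∀ x ∈ P, N.E k x ∈ P := by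
    intro k x hx
    refine (hmin (P.comap (N.E k) ⊓ P) (fun s => ⟨?_, hS s⟩) (fun x hx => ⟨?_, hF0 x hx.2⟩) hx).1
    · show N.E k (g s) ∈ P
      rw [← hgE k]; exact hS _
    · have h1 : N.E k x ∈ P := hx.1
      show N.E k (N.F 0 x) ∈ P
      rw [ef']
      exact P.add_mem (hF0 _ h1) (hH _ _ hx.2)
  exact ⟨P, hS, hE, hH, hF, hmin⟩

end

/-- A weight vector is killed by a power of a weight-shifting operator. -/
lemma exists_pow_eq_zero {V : Type} [AddCommGroup V] [Module ℂ V] [FiniteDimensional ℂ V]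
    (H A : Module.End ℂ V) (c μ : ℂ) (hc : c ≠ 0) (v : V)
    (hv : ∀ k : ℕ, H ((A ^ k) v) = (μ + k * c) • (A ^ k) v) : ∃ k : ℕ, (A ^ k) v = 0 := by
  by_contra! hcon
  have hfin : {a : ℂ | H.HasEigenvalue a}.Finite := Module.End.finite_hasEigenvalue H
  have hinj : Function.Injective (fun k : ℕ => μ + k * c) := by
    intro a b hab
    simpa [hc] using hab
  refine Set.infinite_range_of_injective hinj (hfin.subset ?_)
  rintro _ ⟨k, rfl⟩
  exact Module.End.hasEigenvalue_of_hasEigenvector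
    ⟨Module.End.mem_eigenspace_iff.2 (hv k), hcon k⟩

lemma F_pow_wt (N : Sl2tMod) (μ : ℂ) (v : N.carrier) (hv : N.H 0 v = μ • v) (k : ℕ) :
    N.H 0 ((N.F 0 ^ k) v) = (μ + k * (-2)) • (N.F 0 ^ k) v := by
  induction k with
  | zero => simpa using hv
  | succ k ih =>
    rw [pow_succ', Module.End.mul_apply, hf', ih, map_smul, ← add_smul]
    congr 1; push_cast; ring

lemma E_pow_wt (N : Sl2tMod) (μ : ℂ) (v : N.carrier) (hv : N.H 0 v = μ • v) (k : ℕ) :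
    N.H 0 ((N.E 0 ^ k) v) = (μ + k * 2) • (N.E 0 ^ k) v := by
  induction k with
  | zero => simpa using hv
  | succ k ih =>
    rw [pow_succ', Module.End.mul_apply, he', ih, map_smul, ← add_smul]
    congr 1; push_cast; ring

lemma F_E_pow (N : Sl2tMod) (μ : ℂ) (w : N.carrier) (hw : N.H 0 w = μ • w)
    (hF : N.F 0 w = 0) (k : ℕ) :
    N.F 0 ((N.E 0 ^ (k + 1)) w) = (-(k + 1) * (μ + k)) • (N.E 0 ^ k) w := by
  have hfe : ∀ x, N.F 0 (N.E 0 x) = N.E 0 (N.F 0 x) - N.H 0 x := fun x => by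
    rw [ef']; simp
  induction k with
  | zero => simp [hfe, hF, hw]
  | succ k ih =>
    rw [pow_succ', Module.End.mul_apply, hfe, ih, map_smul, E_pow_wt N μ w hw,
      ← Module.End.mul_apply (N.E 0), ← pow_succ', ← sub_smul]
    congr 1; push_cast; ring

/-- The negative of a lowest weight is a weight. -/
lemma neg_lowest (N : Sl2tMod) [FiniteDimensional ℂ N.carrier] (μ : ℂ) (w : N.carrier)
    (hw : N.H 0 w = μ • w) (hF : N.F 0 w = 0) (hw0 : w ≠ 0) :
    (N.H 0).HasEigenvalue (-μ) := by
  classical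
  have hex := exists_pow_eq_zero (N.H 0) (N.E 0) 2 μ two_ne_zero w (E_pow_wt N μ w hw)
  have hs := Nat.find_spec hex
  have hm := fun {m} => Nat.find_min hex (m := m)
  generalize Nat.find hex = n at hs hm
  rcases n with _ | k
  · exact absurd (by simpa using hs) hw0
  have hk : (N.E 0 ^ k) w ≠ 0 := hm (Nat.lt_succ_self k)
  have h := F_E_pow N μ w hw hF k
  rw [hs, map_zero] at h
  have h2 : (-(k + 1) * (μ + k) : ℂ) = 0 := by
    rcases smul_eq_zero.1 h.symm with h | h
    · exact h
    · exact absurd h hk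
  have h3 : (k + 1 : ℂ) ≠ 0 := Nat.cast_add_one_ne_zero k
  have h4 : μ + k = 0 := by
    rcases mul_eq_zero.1 h2 with h | h
    · exact absurd (neg_eq_zero.1 h) h3
    · exact h
  refine Module.End.hasEigenvalue_of_hasEigenvector (x := (N.E 0 ^ k) w)
    ⟨Module.End.mem_eigenspace_iff.2 ?_, hk⟩
  rw [E_pow_wt N μ w hw]
  congr 1; linear_combination 2 * h4

section
variable {S : Type} [AddCommGroup S] [Module ℂ S] [FiniteDimensional ℂ S]
  {ES HS FS : ℕ → Module.End ℂ S}

lemma F_nilp (K : ℕ) (hK : ∀ μ : ℂ, (HS 0).HasEigenvalue μ → μ.re ≤ K)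
    (hdiag : (⨆ μ : ℂ, Module.End.eigenspace (HS 0) μ) = ⊤)
    (N : Sl2tMod) [FiniteDimensional ℂ N.carrier] (g : S →ₗ[ℂ] N.carrier)
    (hg : IsHom ES HS FS N g) (hgen : Gen N g) (x : N.carrier) :
    (N.F 0 ^ (K + 1)) x = 0 := by
  classical
  let U : Submodule ℂ N.carrier :=
    ⨆ μ : ℂ, ⨆ _ : μ.re ≤ K, Module.End.eigenspace (N.H 0) μ
  have hle : ∀ μ : ℂ, μ.re ≤ K → Module.End.eigenspace (N.H 0) μ ≤ U :=
    fun μ hμ => le_iSup₂_of_le μ hμ le_rfl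
  have hU : ∀ x, x ∈ U := by
    refine hgen U (fun s => ?_) ?_
    · have : (⊤ : Submodule ℂ S) ≤ U.comap g := by
        rw [← hdiag]
        refine iSup_le fun μ y hy => ?_
        by_cases hy0 : y = 0
        · subst hy0; exact Submodule.zero_mem _
        have hμ := hK μ (Module.End.hasEigenvalue_of_hasEigenvector ⟨hy, hy0⟩)
        refine hle μ hμ ?_
        rw [Module.End.mem_eigenspace_iff] at hy ⊢
        rw [← hg.2.1, hy, map_smul]
      exact this trivial
    · show U ≤ U.comap (N.F 0)
      refine iSup₂_le fun μ hμ y hy => ?_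
      have := F_pow_wt N μ y (Module.End.mem_eigenspace_iff.1 hy) 1
      refine hle (μ + (1 : ℕ) * (-2)) ?_ (Module.End.mem_eigenspace_iff.2 (by simpa using this))
      simp; linarith
  have hev : ∀ μ : ℂ, (N.H 0).HasEigenvalue μ → μ.re ≤ K := by
    intro μ hμ
    by_contra hcon
    obtain ⟨v, hv, hv0⟩ := hμ.exists_hasEigenvector
    have hd := (Module.End.eigenspaces_iSupIndep (N.H 0)) μ
    refine hv0 (Submodule.disjoint_def.1 hd v hv ?_)
    have : U ≤ ⨆ j, ⨆ _ : j ≠ μ, Module.End.eigenspace (N.H 0) j :=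
      iSup₂_le fun ν hν => le_iSup₂_of_le ν (fun h => hcon (h ▸ hν)) le_rfl
    exact this (hU v)
  have hUk : U ≤ LinearMap.ker (N.F 0 ^ (K + 1)) := by
    refine iSup₂_le fun μ hμ v hv => ?_
    rw [LinearMap.mem_ker]
    by_contra hne
    rw [Module.End.mem_eigenspace_iff] at hv
    have hex := exists_pow_eq_zero (N.H 0) (N.F 0) (-2) μ (by norm_num) v (F_pow_wt N μ v hv)
    have hs := Nat.find_spec hex
    have hm := fun {m} => Nat.find_min hex (m := m)
    generalize Nat.find hex = n at hs hm
    have hn : K + 1 < n := by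
      by_contra hlt
      obtain ⟨d, hd⟩ := Nat.exists_eq_add_of_le (not_lt.1 hlt)
      apply hne
      rw [hd, add_comm, pow_add, Module.End.mul_apply, hs, map_zero]
    obtain ⟨j, rfl⟩ : ∃ j, n = j + 1 := ⟨n - 1, by omega⟩
    have hj := hev _ (neg_lowest N _ _ (F_pow_wt N μ v hv j)
      (by rw [← Module.End.mul_apply, ← pow_succ', hs]) (hm (Nat.lt_succ_self j)))
    have hjK : (K : ℝ) + 1 ≤ j := by exact_mod_cast (by omega : K + 1 ≤ j)
    simp at hj
    linarith
  exact hUk (hU x)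

lemma finrank_bound (K : ℕ) (N : Sl2tMod) [FiniteDimensional ℂ N.carrier]
    (g : S →ₗ[ℂ] N.carrier) (hgen : Gen N g) (hnil : ∀ x, (N.F 0 ^ (K + 1)) x = 0) :
    finrank ℂ N.carrier ≤ finrank ℂ (Fin (K + 1) → S) := by
  let Φ : (Fin (K + 1) → S) →ₗ[ℂ] N.carrier :=
    ∑ k : Fin (K + 1), (N.F 0 ^ (k : ℕ)) ∘ₗ g ∘ₗ LinearMap.proj k
  have hmem : ∀ (k : ℕ) (s : S), (N.F 0 ^ k) (g s) ∈ LinearMap.range Φ := by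
    intro k s
    by_cases hk : k < K + 1
    · refine ⟨Pi.single ⟨k, hk⟩ s, ?_⟩
      simp only [Φ, LinearMap.sum_apply, LinearMap.comp_apply, LinearMap.proj_apply]
      rw [Finset.sum_eq_single ⟨k, hk⟩]
      · simp
      · intro b _ hb; simp [hb]
      · simp
    · obtain ⟨d, hd⟩ := Nat.exists_eq_add_of_le (not_lt.1 hk)
      rw [hd, pow_add, Module.End.mul_apply, hnil]
      exact Submodule.zero_mem _
  have hsurj : Function.Surjective Φ := by
    refine hgen (LinearMap.range Φ) (fun s => by simpa using hmem 0 s) ?_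
    rintro _ ⟨s, rfl⟩
    simp only [Φ, LinearMap.sum_apply, LinearMap.comp_apply, LinearMap.proj_apply, map_sum]
    refine Submodule.sum_mem _ fun k _ => ?_
    rw [← Module.End.mul_apply, ← pow_succ']
    exact hmem _ _
  exact LinearMap.finrank_le_finrank_of_surjective hsurj

end

end DemazureAux

/-- Let `𝔲 ⊂ sl₂[t]` be the subalgebra spanned by `tⁱ⊗e`, `tⁱ⊗h` (`i ≥ 0`)
and `tʲ⊗f` (`j ≥ 1`), and let `S` be a finite-dimensional `𝔲`-module (given by operators
`ES i`, `HS i` (`i ≥ 0`) and `FS j` (`j ≥ 1`) satisfying the commutation relations of `𝔲`)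
on which `1⊗h` acts diagonalizably.  Then the maximal finite-dimensional quotient of the
induced `sl₂[t]`-module exists: there are a finite-dimensional `sl₂[t]`-module `M` and a
`𝔲`-equivariant map `η : S → M`, universal among `𝔲`-equivariant maps from `S` to
finite-dimensional `sl₂[t]`-modules. -/
theorem demazure_induced_module_current_sl2
    (S : Type) [AddCommGroup S] [Module ℂ S] [FiniteDimensional ℂ S]
    (ES HS FS : ℕ → Module.End ℂ S)
    (rel_he : ∀ i j, HS i * ES j - ES j * HS i = (2 : ℂ) • ES (i + j))
    (rel_hf : ∀ i j, 1 ≤ j → HS i * FS j - FS j * HS i = (-2 : ℂ) • FS (i + j))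
    (rel_ef : ∀ i j, 1 ≤ j → ES i * FS j - FS j * ES i = HS (i + j))
    (rel_hh : ∀ i j, HS i * HS j = HS j * HS i)
    (rel_ee : ∀ i j, ES i * ES j = ES j * ES i)
    (rel_ff : ∀ i j, 1 ≤ i → 1 ≤ j → FS i * FS j = FS j * FS i)
    (hdiagonalizable : (⨆ μ : ℂ, Module.End.eigenspace (HS 0) μ) = ⊤) :
    ∃ M : Sl2tMod, FiniteDimensional ℂ M.carrier ∧
      ∃ η : S →ₗ[ℂ] M.carrier,
        (∀ (i : ℕ) (s : S), η (ES i s) = M.E i (η s)) ∧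
        (∀ (i : ℕ) (s : S), η (HS i s) = M.H i (η s)) ∧
        (∀ (j : ℕ), 1 ≤ j → ∀ s : S, η (FS j s) = M.F j (η s)) ∧
        (∀ N : Sl2tMod, FiniteDimensional ℂ N.carrier →
          ∀ g : S →ₗ[ℂ] N.carrier,
            (∀ (i : ℕ) (s : S), g (ES i s) = N.E i (g s)) →
            (∀ (i : ℕ) (s : S), g (HS i s) = N.H i (g s)) →
            (∀ (j : ℕ), 1 ≤ j → ∀ s : S, g (FS j s) = N.F j (g s)) →
            ∃! φ : M.carrier →ₗ[ℂ] N.carrier,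
              ((∀ k, φ ∘ₗ M.E k = N.E k ∘ₗ φ) ∧
               (∀ k, φ ∘ₗ M.H k = N.H k ∘ₗ φ) ∧
               (∀ k, φ ∘ₗ M.F k = N.F k ∘ₗ φ)) ∧
              φ ∘ₗ η = g) := by
  classical
  obtain ⟨K, hK⟩ : ∃ K : ℕ, ∀ μ : ℂ, (HS 0).HasEigenvalue μ → μ.re ≤ K := by
    have hfin : {a : ℂ | (HS 0).HasEigenvalue a}.Finite := Module.End.finite_hasEigenvalue (HS 0)
    obtain ⟨b, hb⟩ := (hfin.image Complex.re).bddAbove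
    obtain ⟨K, hK⟩ := exists_nat_ge b
    exact ⟨K, fun μ hμ => (hb ⟨μ, hμ, rfl⟩).trans hK⟩
  let Good : ℕ → Prop := fun n => ∃ (N : Sl2tMod) (g : S →ₗ[ℂ] N.carrier),
    FiniteDimensional ℂ N.carrier ∧ DemazureAux.IsHom ES HS FS N g ∧ DemazureAux.Gen N g ∧
      Module.finrank ℂ N.carrier = n
  have hbound : ∀ n, Good n → n ≤ Module.finrank ℂ (Fin (K + 1) → S) := by
    rintro n ⟨N, g, hN, hg, hgen, rfl⟩
    exact DemazureAux.finrank_bound K N g hgen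
      (DemazureAux.F_nilp K hK hdiagonalizable N g hg hgen)
  have h0 : Good (Module.finrank ℂ DemazureAux.zeroMod.carrier) := by
    refine ⟨DemazureAux.zeroMod, 0, ?_, ⟨?_, ?_, ?_⟩, ?_, rfl⟩
    · exact inferInstanceAs (FiniteDimensional ℂ PUnit)
    · intros; rfl
    · intros; rfl
    · intros; rfl
    · intro P _ _ x
      exact P.zero_mem
  have hmax := Nat.findGreatest_spec (P := Good) (hbound _ h0) h0
  have hle : ∀ n, Good n → n ≤ Nat.findGreatest Good (Module.finrank ℂ (Fin (K + 1) → S)) :=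
    fun n hn => Nat.le_findGreatest (hbound n hn) hn
  obtain ⟨M, η, hM, hη, hgen, hrank⟩ := hmax
  rw [← hrank] at hle
  refine ⟨M, hM, η, hη.1, hη.2.1, hη.2.2, ?_⟩
  intro N hN g hgE hgH hgF
  have hgq : DemazureAux.IsHom ES HS FS (DemazureAux.prd M N) (η.prod g) :=
    ⟨fun i s => Prod.ext (hη.1 i s) (hgE i s), fun i s => Prod.ext (hη.2.1 i s) (hgH i s),
      fun j hj s => Prod.ext (hη.2.2 j hj s) (hgF j hj s)⟩
  obtain ⟨P, hPS, hPE, hPH, hPF, hPmin⟩ := DemazureAux.exists_gen _ _ hgq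
  have hfd : FiniteDimensional ℂ (DemazureAux.prd M N).carrier :=
    inferInstanceAs (FiniteDimensional ℂ (M.carrier × N.carrier))
  have hfP : FiniteDimensional ℂ P := inferInstance
  have hgoodP : Good (Module.finrank ℂ P) := by
    refine ⟨DemazureAux.restr _ P hPE hPH hPF,
      LinearMap.codRestrict P (η.prod g) hPS, hfP, ⟨?_, ?_, ?_⟩, ?_, rfl⟩
    · exact fun i s => Subtype.ext (hgq.1 i s)
    · exact fun i s => Subtype.ext (hgq.2.1 i s)
    · exact fun j hj s => Subtype.ext (hgq.2.2 j hj s)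
    · intro Q hQS hQF x
      let Q' : Submodule ℂ P := Q
      have h := hPmin (Q'.map P.subtype) (fun s => ⟨_, hQS s, rfl⟩) (by
        rintro _ ⟨y, hy, rfl⟩
        exact ⟨_, hQF y hy, rfl⟩)
      obtain ⟨y, hy, hyx⟩ := h x.2
      have : y = x := Subtype.ext hyx
      exact this ▸ hy
  let p1 : P →ₗ[ℂ] M.carrier := (LinearMap.fst ℂ M.carrier N.carrier) ∘ₗ P.subtype
  let p2 : P →ₗ[ℂ] N.carrier := (LinearMap.snd ℂ M.carrier N.carrier) ∘ₗ P.subtype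
  have hsurj : Function.Surjective p1 := by
    refine hgen (LinearMap.range p1) (fun s => ⟨⟨_, hPS s⟩, rfl⟩) ?_
    rintro _ ⟨y, rfl⟩
    exact ⟨⟨_, hPF 0 y.1 y.2⟩, rfl⟩
  have hrk : Module.finrank ℂ P = Module.finrank ℂ M.carrier :=
    le_antisymm (hle _ hgoodP) (LinearMap.finrank_le_finrank_of_surjective hsurj)
  have hinj : Function.Injective p1 :=
    (LinearMap.injective_iff_surjective_of_finrank_eq_finrank hrk).2 hsurj
  let e : P ≃ₗ[ℂ] M.carrier := LinearEquiv.ofBijective p1 ⟨hinj, hsurj⟩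
  have he : ∀ y : P, e.symm (p1 y) = y := fun y => e.symm_apply_apply y
  have hφ : ∀ y : P, (p2 ∘ₗ e.symm.toLinearMap) (p1 y) = p2 y := fun y => by
    show p2 (e.symm (p1 y)) = p2 y
    rw [he]
  refine ⟨p2 ∘ₗ e.symm.toLinearMap, ⟨⟨?_, ?_, ?_⟩, ?_⟩, ?_⟩
  · intro k
    refine LinearMap.ext fun m => ?_
    obtain ⟨y, rfl⟩ := hsurj m
    have h := hφ ⟨_, hPE k y.1 y.2⟩
    exact h.trans (congrArg (N.E k) (hφ y).symm)
  · intro k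
    refine LinearMap.ext fun m => ?_
    obtain ⟨y, rfl⟩ := hsurj m
    have h := hφ ⟨_, hPH k y.1 y.2⟩
    exact h.trans (congrArg (N.H k) (hφ y).symm)
  · intro k
    refine LinearMap.ext fun m => ?_
    obtain ⟨y, rfl⟩ := hsurj m
    have h := hφ ⟨_, hPF k y.1 y.2⟩
    exact h.trans (congrArg (N.F k) (hφ y).symm)
  · refine LinearMap.ext fun s => ?_
    exact hφ ⟨_, hPS s⟩
  · rintro ψ ⟨⟨-, -, hψF⟩, hψ⟩
    have hS : ∀ s, (p2 ∘ₗ e.symm.toLinearMap) (η s) = g s := fun s => hφ ⟨_, hPS s⟩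
    have hF : ∀ m, (p2 ∘ₗ e.symm.toLinearMap) (M.F 0 m)
        = N.F 0 ((p2 ∘ₗ e.symm.toLinearMap) m) := by
      intro m
      obtain ⟨y, rfl⟩ := hsurj m
      have h := hφ ⟨_, hPF 0 y.1 y.2⟩
      exact h.trans (congrArg (N.F 0) (hφ y).symm)
    refine LinearMap.ext fun m => ?_
    refine hgen (LinearMap.eqLocus ψ (p2 ∘ₗ e.symm.toLinearMap)) (fun s => ?_) (fun x hx => ?_) m
    · rw [LinearMap.mem_eqLocus, hS]
      exact congrArg (fun A : S →ₗ[ℂ] N.carrier => A s) hψ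
    · rw [LinearMap.mem_eqLocus] at hx ⊢
      rw [hF, ← hx]
      exact congrArg (fun A : M.carrier →ₗ[ℂ] N.carrier => A x) (hψF 0)
end

section
/- Let 𝔞 be a Lie algebra over ℂ, (π₁,v₁),…,(πₙ,vₙ) cyclic 𝔞-modules, and Z = (z₁,…,zₙ) a tuple of pairwise distinct complex numbers. For any c ∈ ℂ with c ≠ 0 and any z ∈ ℂ, let cZ+z = (cz₁+z,…,czₙ+z). Then Fⁱ_{cZ+z} = Fⁱ_Z as subspaces of π₁⊗⋯⊗πₙ, for every i ≥ 0: the filtration of the filtered tensor product is invariant under simultaneous affine reparametrization of the points. -/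
open scoped TensorProduct
open PiTensorProduct

namespace Fusion

lemma monAct_affine {L : Type} {ι : Type} [Fintype ι] [DecidableEq ι]
    (π : ι → Type) [∀ i, AddCommGroup (π i)] [∀ i, Module ℂ (π i)]
    (ρ : ∀ i, L → Module.End ℂ (π i)) (z : ι → ℂ) (c w : ℂ) (k : ℕ) (x : L) :
    monAct π ρ (fun j => c * z j + w) k x =
      ∑ m ∈ Finset.range (k + 1), (c ^ m * w ^ (k - m) * (k.choose m : ℂ)) •
        monAct π ρ z m x := by
  simp only [monAct, Finset.smul_sum]
  rw [Finset.sum_comm]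
  refine Finset.sum_congr rfl fun j _ => ?_
  rw [add_pow, Finset.sum_smul]
  refine Finset.sum_congr rfl fun m _ => ?_
  rw [smul_smul]
  congr 1
  ring

lemma F_affine_le {L : Type} {ι : Type} [Fintype ι] [DecidableEq ι]
    (π : ι → Type) [∀ i, AddCommGroup (π i)] [∀ i, Module ℂ (π i)]
    (ρ : ∀ i, L → Module.End ℂ (π i)) (v : ∀ i, π i) (z : ι → ℂ) (c w : ℂ) (i : ℕ) :
    F π ρ v (fun j => c * z j + w) i ≤ F π ρ v z i := by
  refine Submodule.span_le.2 ?_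
  rintro u ⟨d, hd, hw⟩
  refine F_mono π ρ v z hd ?_
  clear hd
  induction hw with
  | base => exact Submodule.subset_span ⟨0, le_refl 0, IsWord.base⟩
  | step x k _ ih =>
    rw [monAct_affine, LinearMap.sum_apply]
    refine Submodule.sum_mem _ fun m hm => ?_
    rw [LinearMap.smul_apply]
    refine Submodule.smul_mem _ _ (F_mono π ρ v z ?_ (monAct_mem_F π ρ v m x ih))
    have := Finset.mem_range.1 hm
    omega

end Fusion

open Fusion in
/-- The filtration of the filtered tensor product is invariant under a
simultaneous affine reparametrization `Z ↦ cZ + w` (`c ≠ 0`) of the points. -/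
theorem filtration_affine_invariance
    {L : Type} [LieRing L] [LieAlgebra ℂ L]
    (n : ℕ) (π : Fin n → Type) [∀ i, AddCommGroup (π i)] [∀ i, Module ℂ (π i)]
    [∀ i, LieRingModule L (π i)] [∀ i, LieModule ℂ L (π i)]
    (v : ∀ i, π i)
    (hcyc : ∀ i, ∀ N : LieSubmodule ℂ L (π i), v i ∈ N → N = ⊤)
    (z : Fin n → ℂ) (hz : Function.Injective z)
    (c : ℂ) (hc : c ≠ 0) (w : ℂ) (i : ℕ) :
    F π (fun i x => LieModule.toEnd ℂ L (π i) x) v (fun j => c * z j + w) i =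
      F π (fun i x => LieModule.toEnd ℂ L (π i) x) v z i := by
  refine le_antisymm (F_affine_le _ _ _ _ _ _ _) ?_
  have h := F_affine_le π (fun i x => LieModule.toEnd ℂ L (π i) x) v
    (fun j => c * z j + w) c⁻¹ (-(c⁻¹ * w)) i
  have e : (fun j => c⁻¹ * (c * z j + w) + -(c⁻¹ * w)) = z := by
    funext j
    field_simp
    ring
  rwa [e] at h
end
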